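/- arXiv:1610.05979 — 2 statements merged into one kernel-verified Lean document; each statement's English description precedes it below -/
import Mathlib

section
/- Let d ≥ 1 and let G_1,…,G_d be finite simple connected graphs with totally ordered vertex sets, and let 𝒢 = G_1×…×G_d. Let k ≥ 1 and let α ∈ ℤ⟨𝒢_k^{nd}⟩ be an integral linear combination of the monomials C_σ over non-degenerate k-simplices σ. If α lies in the ideal I_rat(𝒢) (i.e., α is rationally equivalent to zero), then α lies in the filtration step F^{k−1}. -/
/-!
The argument climbs the filtration one level at a time, by restricting to simplices. Modulo `I_1`
the ring `Z(𝒢)` is the Stanley–Reisner ring of the simplicial complex of `𝒢`.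

For a nondegenerate simplex `τ` of positive dimension let `L_τ` be the span of the forms
`R^ε_{τ,i}` and `N_τ` the span of the `C_w` with `w` outside `τ`. Two facts carry everything.
* `X_mem_sup`: every generator `C_v` lies in `L_τ + N_τ`. If `i` is a direction of the step from
  `τ_s` to `τ_{s+1}`, then `R^0_{τ,i}` is `C_{τ_0} + … + C_{τ_s}` modulo `N_τ`, and differences of
  these partial sums give the single vertices.
* `Cmon_mul_Nsub_mul_mem`: modulo `I_1`, the product of `C_τ` and an element of `N_τ` is a
  combination of monomials `C_{τ'}` with `τ'` one dimension larger and containing `τ`; moreover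
  `L_τ ⊆ L_{τ'}`.

Start of the climb (`mem_Jsub_one`): in degree `k + 1 ≥ 3` the multiples of (R3), and the multiples
of (R2) by a second vertex, can be rewritten by means of these two facts as combinations of
`C_τ ∏ R^ε_{τ,i}` with `dim τ ≥ 1`. The remaining generators `C_u^k ∑_v C_v` do not occur, because
no combination of nondegenerate `k`-simplices contains the monomial `C_u^{k+1}`.

Inductive step (`mem_Jsub_succ`): write `α` as a sum over the `l`-simplices of `C_τ q_τ` with `q_τ`
a form of degree `k - l ≥ 2` in the `R^ε_{τ,i}`, modulo level `l + 1`. Restricting to the vertices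
of one `τ` kills `α`, `I_1`, the terms of higher dimension and the other `l`-simplices, so the
restriction of `q_τ` to `τ` vanishes. By `mem_mul_pow_of_psi_eq_zero` this puts `q_τ` into
`N_τ · L_τ^{k-l-1}`, whence `C_τ q_τ` lies in level `l + 1` by the second fact. At least one factor
of `L_τ` must survive, which is why the climb stops at level `k - 1`.
-/

open MvPolynomial

namespace ChowGS

variable {d : ℕ}

section General

variable (V : Fin d → Type) [∀ i, Fintype (V i)] [∀ i, LinearOrder (V i)]
variable (G : ∀ i, SimpleGraph (V i))

/-- The vertex set of the product `𝒢 = G_1 × … × G_d`. -/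
abbrev GV : Type := ∀ i, V i

/-- `u ≤ v` is a 1-simplex of the product. -/
def OneSimplex (u v : GV V) : Prop :=
  u ≤ v ∧ ∀ i, u i = v i ∨ (G i).Adj (u i) (v i)

/-- `I(u,v)`: the set of coordinates where `u` is strictly smaller than `v`. -/
def Iset (u v : GV V) : Finset (Fin d) :=
  Finset.univ.filter fun i => u i < v i

/-- A (possibly degenerate) `k`-simplex of the product. -/
def IsSimplexChain {k : ℕ} (σ : Fin (k + 1) → GV V) : Prop :=
  Monotone σ ∧
  (∀ j : Fin k, OneSimplex V G (σ j.castSucc) (σ j.succ)) ∧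
  ∀ j j' : Fin k, j ≠ j' →
    Disjoint (Iset V (σ j.castSucc) (σ j.succ)) (Iset V (σ j'.castSucc) (σ j'.succ))

/-- A list of vertices forms a simplex of `𝒢`. -/
def FormsSimplex (l : List (GV V)) : Prop :=
  ∃ (k : ℕ) (σ : Fin (k + 1) → GV V), IsSimplexChain V G σ ∧ l.Subperm (List.ofFn σ)

/-- The ideal of elements rationally equivalent to zero, generated by (R1), (R2), (R3). -/
noncomputable def Irat : Ideal (MvPolynomial (GV V) ℤ) :=
  Ideal.span
    ({ p | ∃ l : List (GV V), ¬ FormsSimplex V G l ∧ p = (l.map X).prod } ∪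
     { p | ∃ u : GV V, p = X u * ∑ v : GV V, X v } ∪
     { p | ∃ u w : GV V, ∃ i : Fin d, u i ≠ w i ∧
         p = X u * X w * ∑ v ∈ Finset.univ.filter (fun v : GV V => v i = u i), X v })

/-- The combinatorial Chow ring of the product of graphs. -/
abbrev Chow : Type := MvPolynomial (GV V) ℤ ⧸ Irat V G

noncomputable def mkChow : MvPolynomial (GV V) ℤ →ₐ[ℤ] Chow V G :=
  Ideal.Quotient.mkₐ ℤ (Irat V G)

/-- The degree `n` graded piece of the Chow ring. -/
noncomputable def chowPiece (n : ℕ) : Submodule ℤ (Chow V G) :=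
  Submodule.map (mkChow V G).toLinearMap (homogeneousSubmodule (GV V) ℤ n)

end General
end ChowGS

namespace ChowGS

section Nondeg

variable {d : ℕ}
variable (V : Fin d → Type) [∀ i, Fintype (V i)] [∀ i, LinearOrder (V i)]
variable (G : ∀ i, SimpleGraph (V i))

/-- A non-degenerate `k`-simplex of the product. -/
def IsNondegSimplex {k : ℕ} (σ : Fin (k + 1) → GV V) : Prop :=
  IsSimplexChain V G σ ∧ StrictMono σ

/-- The monomial `C_σ = ∏_j C_{σ(j)}` attached to a simplex. -/
noncomputable def Cmon {k : ℕ} (σ : Fin (k + 1) → GV V) : MvPolynomial (GV V) ℤ :=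
  ∏ j, MvPolynomial.X (σ j)

/-- The combinatorial cube `e_{u,v} = ∏_i {u_i, v_i}` spanned by a 1-simplex `u ≤ v`. -/
def cubeOf (u v : GV V) : Finset (GV V) :=
  Finset.univ.filter fun w => ∀ i, w i = u i ∨ w i = v i

/-- The element `R̃_{σ,i,j}` attached to a simplex `σ`, a position `t` and
indices `i, j ∈ I(σ_t, σ_{t+1})`. -/
noncomputable def Rtilde {k : ℕ} (σ : Fin (k + 1) → GV V) (t : Fin k) (i j : Fin d) :
    MvPolynomial (GV V) ℤ :=
  (∑ w ∈ (cubeOf V (σ t.castSucc) (σ t.succ)).filter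
      (fun w => w i = σ t.castSucc i), MvPolynomial.X w)
  - ∑ w ∈ (cubeOf V (σ t.castSucc) (σ t.succ)).filter
      (fun w => w j = σ t.castSucc j), MvPolynomial.X w

/-- `ℤ⟨𝒢_k^{nd}⟩`: the subgroup of `Z(𝒢)` generated by the monomials of
non-degenerate `k`-simplices. -/
noncomputable def Znd (k : ℕ) : Submodule ℤ (MvPolynomial (GV V) ℤ) :=
  Submodule.span ℤ
    {p | ∃ σ : Fin (k + 1) → GV V, IsNondegSimplex V G σ ∧ p = Cmon V σ}

/-- `I_k^{nd}`: the subgroup of `ℤ⟨𝒢_k^{nd}⟩` generated by the elements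
`C_σ · R̃_{σ,i,j}`. -/
noncomputable def Ind (k : ℕ) : Submodule ℤ (MvPolynomial (GV V) ℤ) :=
  Submodule.span ℤ
    {p | ∃ σ : Fin (k + 1) → GV V, IsNondegSimplex V G σ ∧
      ∃ (t : Fin k) (i j : Fin d),
        i ∈ Iset V (σ t.castSucc) (σ t.succ) ∧ j ∈ Iset V (σ t.castSucc) (σ t.succ) ∧
        p = Cmon V σ * Rtilde V σ t i j}

end Nondeg
end ChowGS

namespace ChowGS

section Rels

variable {d : ℕ}
variable (V : Fin d → Type) [∀ i, Fintype (V i)] [∀ i, LinearOrder (V i)]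
variable (G : ∀ i, SimpleGraph (V i))

/-- The ideal `I_1` generated by the relations (R1) alone. -/
noncomputable def Ione : Ideal (MvPolynomial (GV V) ℤ) :=
  Ideal.span {p | ∃ l : List (GV V), ¬ FormsSimplex V G l ∧ p = (l.map MvPolynomial.X).prod}

/-- `I(τ)` for a simplex `τ`: the (disjoint) union of the sets `I(τ_t, τ_{t+1})`,
which equals `I(τ_0, τ_last)`. -/
def Itau {k : ℕ} (τ : Fin (k + 1) → GV V) : Finset (Fin d) :=
  Iset V (τ 0) (τ (Fin.last k))

/-- `R^ε_{τ,i}`: for `i ∈ I(τ)`, the sum of all `C_w` over the vertices `w` whose `i`-th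
coordinate equals the lower (`ε = false`) resp. upper (`ε = true`) endpoint of the edge of
`G_i` traversed by `τ` in direction `i`. -/
noncomputable def Rend {k : ℕ} (τ : Fin (k + 1) → GV V) (i : Fin d) (ε : Bool) :
    MvPolynomial (GV V) ℤ :=
  ∑ w ∈ Finset.univ.filter
      (fun w : GV V => w i = (if ε then τ (Fin.last k) else τ 0) i),
    MvPolynomial.X w

/-- `𝒜_τ(m)`: the multisets of size `m` of pairs `(i, ε)` with `i ∈ I(τ)`. -/
def Atau {k : ℕ} (τ : Fin (k + 1) → GV V) (m : ℕ) : Set (Multiset (Fin d × Bool)) :=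
  {S | Multiset.card S = m ∧ ∀ p ∈ S, p.1 ∈ Itau V τ}

/-- The product `∏_{(i,ε) ∈ S} R^ε_{τ,i}`. -/
noncomputable def Rprod {k : ℕ} (τ : Fin (k + 1) → GV V) (S : Multiset (Fin d × Bool)) :
    MvPolynomial (GV V) ℤ :=
  (S.map fun p => Rend V τ p.1 p.2).prod

end Rels
end ChowGS

namespace ChowGS

section Filtr

variable {d : ℕ}
variable (V : Fin d → Type) [∀ i, Fintype (V i)] [∀ i, LinearOrder (V i)]
variable (G : ∀ i, SimpleGraph (V i))

/-- The span of the products `C_τ ∏_{(i,ε)∈S} R^ε_{τ,i}` over non-degenerate `t`-simplices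
`τ` with `l ≤ t ≤ k − 1` and `S ∈ 𝒜_τ(k−t)`. -/
noncomputable def FsSpan (k l : ℕ) : Submodule ℤ (MvPolynomial (GV V) ℤ) :=
  Submodule.span ℤ
    {p : MvPolynomial (GV V) ℤ | ∃ t : ℕ, l ≤ t ∧ t + 1 ≤ k ∧
      ∃ τ : Fin (t + 1) → GV V, IsNondegSimplex V G τ ∧
        ∃ S ∈ Atau V τ (k - t), p = Cmon V τ * Rprod V τ S}

/-- The decreasing filtration `F^l` on `Z^{k+1}(𝒢)`: `F^0 = I_rat ∩ Z^{k+1}`,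
`F^l` for `1 ≤ l ≤ k−1` the set of elements expressible as `β + Σ a_{τ,S} C_τ ∏ R^ε_{τ,i}`
with `β ∈ I_1`, over non-degenerate `t`-simplices with `l ≤ t ≤ k−1`, and `F^k = I_k^{nd}`. -/
noncomputable def Fstep (k l : ℕ) : Set (MvPolynomial (GV V) ℤ) :=
  if l = 0 then
    {α | α ∈ Irat V G ∧ α ∈ MvPolynomial.homogeneousSubmodule (GV V) ℤ (k + 1)}
  else if l = k then (Ind V G k : Set (MvPolynomial (GV V) ℤ))
  else {α | ∃ β ∈ Ione V G, α - β ∈ FsSpan V G k l}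

end Filtr
end ChowGS
namespace ChowGS

set_option linter.unusedSectionVars false

section Combinatorics

variable {d : ℕ}
variable {V : Fin d → Type} [∀ i, Fintype (V i)] [∀ i, LinearOrder (V i)]
variable {G : ∀ i, SimpleGraph (V i)}

/-! ### Simplices as chains moving at most once in each coordinate -/

lemma exists_step {β : Type*} [LinearOrder β] {n : ℕ} {f : Fin (n + 1) → β} (hf : Monotone f)
    {a b : Fin (n + 1)} (h : f a < f b) :
    ∃ j : Fin n, a ≤ j.castSucc ∧ j.succ ≤ b ∧ f j.castSucc < f j.succ := by
  by_contra! hcon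
  have hab : a ≤ b := le_of_lt (hf.reflect_lt h)
  have key : ∀ c : Fin (n + 1), a ≤ c → c ≤ b → f c ≤ f a := by
    intro c
    induction c using Fin.induction with
    | zero =>
      intro h1 _
      exact hf (by simp)
    | succ j ih =>
      intro h1 h2
      rcases eq_or_lt_of_le h1 with h3 | h3
      · rw [h3]
      · have h4 : a ≤ j.castSucc := Fin.le_castSucc_iff.2 h3
        exact (hcon j h4 h2).trans (ih h4 ((Fin.castSucc_lt_succ).le.trans h2))
  exact absurd h (not_lt.2 (key b hab le_rfl))

/-- The description of a simplex by pairs and triples of positions instead of consecutive steps: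
each coordinate changes at most once along the chain, and the change is along an edge. In this
form stability under monotone reindexing is evident. -/
lemma isSimplexChain_iff {k : ℕ} {σ : Fin (k + 1) → GV V} :
    IsSimplexChain V G σ ↔ Monotone σ ∧
      (∀ i a b c, a ≤ b → b ≤ c → σ a i = σ b i ∨ σ b i = σ c i) ∧
      ∀ i a b, a ≤ b → σ a i = σ b i ∨ (G i).Adj (σ a i) (σ b i) := by
  constructor
  · rintro ⟨hm, h1, h2⟩
    have hmi : ∀ i, Monotone fun a => σ a i := fun i a b h => hm h i
    have htwo : ∀ i a b c, a ≤ b → b ≤ c → σ a i = σ b i ∨ σ b i = σ c i := by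
      intro i a b c hab hbc
      by_contra! hne
      obtain ⟨j, -, hjb, hj⟩ := exists_step (hmi i) (lt_of_le_of_ne (hmi i hab) hne.1)
      obtain ⟨j', hbj, -, hj'⟩ := exists_step (hmi i) (lt_of_le_of_ne (hmi i hbc) hne.2)
      have hlt : j < j' := by
        have := hjb.trans hbj
        simp only [Fin.le_def, Fin.lt_def, Fin.val_succ, Fin.val_castSucc] at this ⊢
        omega
      exact Finset.disjoint_left.1 (h2 j j' hlt.ne) (by simpa [Iset] using hj)
        (by simpa [Iset] using hj')
    refine ⟨hm, htwo, ?_⟩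
    intro i a b hab
    rcases eq_or_lt_of_le (hmi i hab) with h | h
    · exact Or.inl h
    · obtain ⟨j, haj, hjb, hj⟩ := exists_step (hmi i) h
      have e1 : σ a i = σ j.castSucc i :=
        (htwo i a _ j.succ haj Fin.castSucc_lt_succ.le).resolve_right hj.ne
      have e2 : σ j.succ i = σ b i :=
        (htwo i j.castSucc j.succ b Fin.castSucc_lt_succ.le hjb).resolve_left hj.ne
      right
      rw [e1, ← e2]
      exact ((h1 j).2 i).resolve_left hj.ne
  · rintro ⟨hm, h2, h1⟩
    refine ⟨hm, fun j => ⟨hm Fin.castSucc_lt_succ.le, fun i => h1 i _ _ Fin.castSucc_lt_succ.le⟩, ?_⟩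
    have key : ∀ j j' : Fin k, j < j' →
        Disjoint (Iset V (σ j.castSucc) (σ j.succ)) (Iset V (σ j'.castSucc) (σ j'.succ)) := by
      intro j j' hlt
      rw [Finset.disjoint_left]
      intro i hi hi'
      simp only [Iset, Finset.mem_filter, Finset.mem_univ, true_and] at hi hi'
      have hle : j.succ ≤ j'.castSucc := by
        simp only [Fin.le_def, Fin.lt_def, Fin.val_succ, Fin.val_castSucc] at hlt ⊢
        omega
      have hlt' : σ j.succ i < σ j'.succ i := (hm hle i).trans_lt hi'
      rcases h2 i j.castSucc j.succ j'.succ Fin.castSucc_lt_succ.le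
        (hle.trans Fin.castSucc_lt_succ.le) with h | h
      · exact hi.ne h
      · exact hlt'.ne h
    intro j j' hne
    rcases lt_or_gt_of_ne hne with h | h
    · exact key j j' h
    · exact (key j' j h).symm

lemma IsSimplexChain.comp {k m : ℕ} {σ : Fin (k + 1) → GV V} (hσ : IsSimplexChain V G σ)
    {f : Fin (m + 1) → Fin (k + 1)} (hf : Monotone f) : IsSimplexChain V G (σ ∘ f) := by
  rw [isSimplexChain_iff] at hσ ⊢
  obtain ⟨hm, h2, h1⟩ := hσ
  exact ⟨hm.comp hf, fun i a b c hab hbc => h2 i _ _ _ (hf hab) (hf hbc),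
    fun i a b hab => h1 i _ _ (hf hab)⟩

/-- Along a simplex a coordinate takes only its initial and its final value. -/
lemma IsSimplexChain.two_values {k : ℕ} {σ : Fin (k + 1) → GV V} (hσ : IsSimplexChain V G σ)
    (i : Fin d) (a : Fin (k + 1)) : σ a i = σ 0 i ∨ σ a i = σ (Fin.last k) i := by
  rcases (isSimplexChain_iff.1 hσ).2.1 i 0 a (Fin.last k) (Fin.zero_le _) (Fin.le_last _) with h | h
  · exact Or.inl h.symm
  · exact Or.inr h

lemma mem_Itau {k : ℕ} {τ : Fin (k + 1) → GV V} {i : Fin d} :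
    i ∈ Itau V τ ↔ τ 0 i < τ (Fin.last k) i := by
  simp [Itau, Iset]

/-- A list of vertices of a simplex, with arbitrary multiplicities, forms a simplex. -/
lemma formsSimplex_of_forall_mem {k : ℕ} {σ : Fin (k + 1) → GV V} (hσ : IsSimplexChain V G σ)
    {l : List (GV V)} (hl : ∀ v ∈ l, v ∈ Set.range σ) : FormsSimplex V G l := by
  obtain ⟨s, rfl⟩ : ∃ s : List (Fin (k + 1)), s.map σ = l := by
    rw [← Set.mem_range, Set.range_list_map]
    exact hl
  have hperm := List.perm_insertionSort (· ≤ ·) s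
  have hsort : (s.insertionSort (· ≤ ·)).SortedLE := List.sortedLE_insertionSort
  generalize s.insertionSort (· ≤ ·) = s' at hperm hsort
  match hn : s'.length with
  | 0 =>
    have : s' = [] := List.length_eq_zero_iff.1 hn
    subst this
    have : s = [] := List.Perm.eq_nil hperm.symm
    subst this
    exact ⟨k, σ, hσ, by simp⟩
  | n + 1 =>
    refine ⟨n, σ ∘ fun a => s'.get (a.cast hn.symm), hσ.comp ?_, ?_⟩
    · intro a b hab
      exact hsort hab
    · have : List.ofFn (σ ∘ fun a : Fin (n + 1) => s'.get (a.cast hn.symm)) = s'.map σ := by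
        apply List.ext_get
        · simp [hn]
        · intro m h1 h2
          rw [List.get_eq_getElem, List.getElem_ofFn]
          simp
      rw [this]
      exact (hperm.symm.map σ).subperm

/-- A finite set of vertices forming a simplex is the vertex set of a nondegenerate simplex. -/
lemma exists_nondeg_of_formsSimplex {l : List (GV V)} (hl : FormsSimplex V G l) (hnd : l.Nodup)
    {n : ℕ} (hlen : l.length = n + 1) :
    ∃ τ : Fin (n + 1) → GV V, IsNondegSimplex V G τ ∧ (List.ofFn τ).Perm l := by
  obtain ⟨k, σ, hσ, l', hl'p, hl's⟩ := hl
  obtain ⟨f, hf⟩ := List.sublist_iff_exists_fin_orderEmbedding_get_eq.1 hl's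
  have hlen' : l'.length = n + 1 := hl'p.length_eq.trans hlen
  have hk : (List.ofFn σ).length = k + 1 := List.length_ofFn
  let g : Fin (n + 1) → Fin (k + 1) := fun a => (f (a.cast hlen'.symm)).cast hk
  have hg : ∀ a, l'.get (Fin.cast hlen'.symm a) = σ (g a) := by
    intro a
    rw [hf]
    simp only [List.get_eq_getElem, List.getElem_ofFn, g]
    rfl
  have hgm : Monotone g := fun a b hab => f.monotone hab
  have hof : List.ofFn (σ ∘ g) = l' := by
    apply List.ext_get
    · rw [List.length_ofFn, hlen']
    · intro m h1 h2
      rw [List.length_ofFn] at h1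
      have := hg ⟨m, h1⟩
      simp only [List.get_eq_getElem, List.getElem_ofFn, Function.comp] at this ⊢
      exact this.symm
  have hinj : Function.Injective (σ ∘ g) := by
    rw [← List.nodup_ofFn, hof]
    exact hl'p.nodup_iff.2 hnd
  have hc := hσ.comp hgm
  exact ⟨σ ∘ g, ⟨hc, hc.1.strictMono_of_injective hinj⟩, hof ▸ hl'p⟩

/-- If the vertices of a simplex `τ` all occur in a simplex `τ'`, then every direction of `τ` is a
direction of `τ'`, traversed along the same edge. -/
lemma endpoints_eq_of_range_subset {k m : ℕ} {τ : Fin (k + 1) → GV V} {τ' : Fin (m + 1) → GV V}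
    (hτ' : IsSimplexChain V G τ') (hsub : Set.range τ ⊆ Set.range τ')
    {i : Fin d} (hi : i ∈ Itau V τ) :
    i ∈ Itau V τ' ∧ τ' 0 i = τ 0 i ∧ τ' (Fin.last m) i = τ (Fin.last k) i := by
  rw [mem_Itau] at hi ⊢
  obtain ⟨a, ha⟩ := hsub (Set.mem_range_self 0)
  obtain ⟨b, hb⟩ := hsub (Set.mem_range_self (Fin.last k))
  have h0 : τ' 0 i ≤ τ 0 i := ha ▸ hτ'.1 (Fin.zero_le a) i
  have h1 : τ (Fin.last k) i ≤ τ' (Fin.last m) i := hb ▸ hτ'.1 (Fin.le_last b) i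
  have ha' := hτ'.two_values i a
  have hb' := hτ'.two_values i b
  rw [ha] at ha'
  rw [hb] at hb'
  have e0 : τ 0 i = τ' 0 i := ha'.resolve_right (hi.trans_le h1).ne
  have e1 : τ (Fin.last k) i = τ' (Fin.last m) i := hb'.resolve_left (h0.trans_lt hi).ne'
  exact ⟨e0 ▸ e1 ▸ hi, e0.symm, e1.symm⟩

lemma Cmon_eq_list_prod {k : ℕ} (τ : Fin (k + 1) → GV V) :
    Cmon V τ = ((List.ofFn τ).map MvPolynomial.X).prod := by
  rw [List.map_ofFn, List.prod_ofFn]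
  rfl

/-- Multiplying `C_τ` by a vertex outside `τ` gives either a monomial killed by (R1) or the
monomial of a larger nondegenerate simplex. -/
lemma Cmon_mul_X {k : ℕ} {τ : Fin (k + 1) → GV V} (hτ : IsNondegSimplex V G τ) {w : GV V}
    (hw : w ∉ Set.range τ) :
    Cmon V τ * MvPolynomial.X w ∈ Ione V G ∨
      ∃ τ' : Fin (k + 1 + 1) → GV V, IsNondegSimplex V G τ' ∧
        Cmon V τ' = Cmon V τ * MvPolynomial.X w ∧ Set.range τ ⊆ Set.range τ' := by
  have hprod : ((w :: List.ofFn τ).map MvPolynomial.X).prod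
      = Cmon V τ * (MvPolynomial.X w : MvPolynomial (GV V) ℤ) := by
    rw [List.map_cons, List.prod_cons, ← Cmon_eq_list_prod, mul_comm]
  by_cases hs : FormsSimplex V G (w :: List.ofFn τ)
  · right
    have hnd : (w :: List.ofFn τ).Nodup := by
      rw [List.nodup_cons, List.mem_ofFn', List.nodup_ofFn]
      exact ⟨hw, hτ.2.injective⟩
    obtain ⟨τ', hτ', hp⟩ := exists_nondeg_of_formsSimplex hs hnd (n := k + 1) (by simp)
    refine ⟨τ', hτ', ?_, ?_⟩
    · rw [Cmon_eq_list_prod, (hp.map _).prod_eq, hprod]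
    · rintro _ ⟨a, rfl⟩
      rw [← List.mem_ofFn', hp.mem_iff]
      exact List.mem_cons_of_mem _ ((List.mem_ofFn' _ _).2 ⟨a, rfl⟩)
  · left
    exact Ideal.subset_span ⟨_, hs, hprod.symm⟩

/-- A vertex whose `i`-th coordinate lies off the edge traversed by `τ` in direction `i ∈ I(τ)`
does not form a simplex with `τ`. -/
lemma Cmon_mul_X_mem_Ione {k : ℕ} {τ : Fin (k + 1) → GV V}
    {i : Fin d} (hi : i ∈ Itau V τ) {w : GV V} (h0 : w i ≠ τ 0 i)
    (h1 : w i ≠ τ (Fin.last k) i) : Cmon V τ * MvPolynomial.X w ∈ Ione V G := by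
  have hprod : ((w :: List.ofFn τ).map MvPolynomial.X).prod
      = Cmon V τ * (MvPolynomial.X w : MvPolynomial (GV V) ℤ) := by
    rw [List.map_cons, List.prod_cons, ← Cmon_eq_list_prod, mul_comm]
  refine Ideal.subset_span ⟨_, fun hs => ?_, hprod.symm⟩
  obtain ⟨n, σ, hσ, hsub⟩ := hs
  have hmem : ∀ v ∈ w :: List.ofFn τ, v ∈ Set.range σ := fun v hv =>
    (List.mem_ofFn' _ _).1 (hsub.subset hv)
  have hr : Set.range τ ⊆ Set.range σ := by
    rintro _ ⟨a, rfl⟩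
    exact hmem _ (List.mem_cons_of_mem _ ((List.mem_ofFn' _ _).2 ⟨a, rfl⟩))
  obtain ⟨-, e0, e1⟩ := endpoints_eq_of_range_subset hσ hr hi
  obtain ⟨a, ha⟩ := hmem w (by simp)
  rcases hσ.two_values i a with h | h
  · exact h0 (by rw [← ha, h, e0])
  · exact h1 (by rw [← ha, h, e1])

/-- Two distinct vertices forming a simplex are the vertices of a nondegenerate `1`-simplex. -/
lemma exists_edge_of_formsSimplex {u w : GV V} (huw : u ≠ w) (h : FormsSimplex V G [u, w]) :
    ∃ τ : Fin (1 + 1) → GV V, IsNondegSimplex V G τ ∧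
      Cmon V τ = MvPolynomial.X u * MvPolynomial.X w ∧
      (τ 0 = u ∧ τ (Fin.last 1) = w ∨ τ 0 = w ∧ τ (Fin.last 1) = u) := by
  obtain ⟨τ, hτ, hp⟩ := exists_nondeg_of_formsSimplex h (n := 1) (by simpa using huw) (by simp)
  refine ⟨τ, hτ, ?_, ?_⟩
  · rw [Cmon_eq_list_prod, (hp.map _).prod_eq]
    simp
  · have h0 : τ 0 ∈ [u, w] := hp.mem_iff.1 ((List.mem_ofFn' _ _).2 ⟨0, rfl⟩)
    have h1 : τ (Fin.last 1) ∈ [u, w] := hp.mem_iff.1 ((List.mem_ofFn' _ _).2 ⟨_, rfl⟩)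
    have hne : τ 0 ≠ τ (Fin.last 1) := hτ.2.injective.ne (by decide)
    simp only [List.mem_cons, List.not_mem_nil, or_false] at h0 h1
    grind

end Combinatorics
end ChowGS
namespace ChowGS

set_option linter.unusedSectionVars false

section Algebra

variable {d : ℕ}
variable (V : Fin d → Type) [∀ i, Fintype (V i)] [∀ i, LinearOrder (V i)]
variable (G : ∀ i, SimpleGraph (V i))

/-! ### Linear forms attached to a simplex -/

/-- `L_τ`: the subgroup of linear forms spanned by the `R^ε_{τ,i}` with `i ∈ I(τ)`. -/
noncomputable def Lsub {t : ℕ} (τ : Fin (t + 1) → GV V) : Submodule ℤ (MvPolynomial (GV V) ℤ) :=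
  Submodule.span ℤ {r | ∃ i ∈ Itau V τ, ∃ ε, r = Rend V τ i ε}

/-- `N_τ`: the subgroup of linear forms spanned by the `C_w` with `w` not a vertex of `τ`. -/
noncomputable def Nsub {t : ℕ} (τ : Fin (t + 1) → GV V) : Submodule ℤ (MvPolynomial (GV V) ℤ) :=
  Submodule.span ℤ {p | ∃ w, w ∉ Set.range τ ∧ p = MvPolynomial.X w}

/-- The sum of `I_1` and `FsSpan V G k l`, as a subgroup; for `1 ≤ l < k` its elements are those
of the filtration step `F^l`. -/
noncomputable def Jsub (k l : ℕ) : Submodule ℤ (MvPolynomial (GV V) ℤ) :=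
  (Ione V G).restrictScalars ℤ ⊔ FsSpan V G k l

variable {V G}

lemma Ione_le_Jsub {k l : ℕ} {f : MvPolynomial (GV V) ℤ} (hf : f ∈ Ione V G) :
    f ∈ Jsub V G k l :=
  Submodule.mem_sup_left (by simpa using hf)

lemma Lsub_le_of_range_subset {k m : ℕ} {τ : Fin (k + 1) → GV V} {τ' : Fin (m + 1) → GV V}
    (hτ' : IsSimplexChain V G τ') (hsub : Set.range τ ⊆ Set.range τ') :
    Lsub V τ ≤ Lsub V τ' := by
  refine Submodule.span_mono ?_
  rintro _ ⟨i, hi, ε, rfl⟩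
  obtain ⟨hi', e0, e1⟩ := endpoints_eq_of_range_subset hτ' hsub hi
  refine ⟨i, hi', ε, ?_⟩
  cases ε <;> simp [Rend, e0, e1]

lemma Cmon_mul_mem_Jsub {k l t m : ℕ} {τ : Fin (t + 1) → GV V} (hτ : IsNondegSimplex V G τ)
    (hl : l ≤ t) (hm : t + (m + 1) = k) {q : MvPolynomial (GV V) ℤ}
    (hq : q ∈ Lsub V τ ^ (m + 1)) : Cmon V τ * q ∈ Jsub V G k l := by
  refine Submodule.mem_sup_right ?_
  rw [Lsub, Submodule.span_pow] at hq
  induction hq using Submodule.span_induction with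
  | mem x hx =>
    obtain ⟨f, rfl⟩ := Set.mem_pow.1 hx
    choose i hi ε hε using fun a => (f a).2
    refine Submodule.subset_span ⟨t, hl, by omega, τ, hτ,
      Multiset.ofList (List.ofFn fun a => (i a, ε a)), ⟨?_, ?_⟩, ?_⟩
    · simp only [Multiset.coe_card, List.length_ofFn]
      omega
    · intro p hp
      obtain ⟨a, rfl⟩ := (List.mem_ofFn' _ _).1 (Multiset.mem_coe.1 hp)
      exact hi a
    · rw [Rprod, Multiset.map_coe, Multiset.prod_coe, List.map_ofFn]
      simp only [hε]
      rfl
  | zero => simp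
  | add x y _ _ hx hy => rw [mul_add]; exact add_mem hx hy
  | smul a x _ hx => rw [mul_smul_comm]; exact Submodule.smul_mem _ a hx

/-- Modulo `I_1`, multiplying `C_τ` by an element of `N_τ` raises the dimension of `τ`. -/
lemma Cmon_mul_Nsub_mul_mem {k l t : ℕ} {τ : Fin (t + 1) → GV V} (hτ : IsNondegSimplex V G τ)
    {q : MvPolynomial (GV V) ℤ}
    (hq : ∀ τ' : Fin (t + 1 + 1) → GV V, IsNondegSimplex V G τ' → Set.range τ ⊆ Set.range τ' →
      Cmon V τ' * q ∈ Jsub V G k l)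
    {n : MvPolynomial (GV V) ℤ} (hn : n ∈ Nsub V τ) : Cmon V τ * n * q ∈ Jsub V G k l := by
  induction hn using Submodule.span_induction with
  | mem x hx =>
    obtain ⟨w, hw, rfl⟩ := hx
    rcases Cmon_mul_X hτ hw with h | ⟨τ', hτ', hC, hsub⟩
    · exact Ione_le_Jsub (Ideal.mul_mem_right _ _ h)
    · rw [← hC]
      exact hq τ' hτ' hsub
  | zero => simp
  | add x y _ _ hx hy => rw [mul_add, add_mul]; exact add_mem hx hy
  | smul a x _ hx =>
    rw [mul_smul_comm, smul_mul_assoc]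
    exact Submodule.smul_mem _ a hx

lemma sum_filter_sub_mem_Nsub {t : ℕ} {τ : Fin (t + 1) → GV V} (hinj : Function.Injective τ)
    (p : GV V → Prop) [DecidablePred p] :
    ∑ w ∈ Finset.univ.filter p, (MvPolynomial.X w : MvPolynomial (GV V) ℤ)
      - ∑ b ∈ Finset.univ.filter (fun b => p (τ b)), MvPolynomial.X (τ b) ∈ Nsub V τ := by
  classical
  have h : ∑ b ∈ Finset.univ.filter (fun b => p (τ b)),
      (MvPolynomial.X (τ b) : MvPolynomial (GV V) ℤ)
      = ∑ w ∈ (Finset.univ.filter p).filter (fun w => w ∈ Set.range τ), MvPolynomial.X w := by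
    refine Finset.sum_bij (fun b _ => τ b) ?_ ?_ ?_ ?_
    · intro b hb; simpa using hb
    · intro b _ c _ h; exact hinj h
    · intro w hw
      simp only [Finset.mem_filter, Finset.mem_univ, true_and] at hw
      obtain ⟨h1, b, rfl⟩ := hw
      exact ⟨b, by simpa using h1, rfl⟩
    · intros; rfl
  rw [h, ← Finset.sum_filter_add_sum_filter_not (Finset.univ.filter p)
    (fun w => w ∈ Set.range τ), add_sub_cancel_left]
  refine Submodule.sum_mem _ fun w hw => Submodule.subset_span ⟨w, ?_, rfl⟩
  exact (Finset.mem_filter.1 hw).2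

lemma exists_mem_Iset {t : ℕ} {τ : Fin (t + 1) → GV V} (hτ : IsNondegSimplex V G τ) (s : Fin t) :
    ∃ i, τ s.castSucc i < τ s.succ i := by
  have h := hτ.2 (Fin.castSucc_lt_succ (i := s))
  exact (Pi.lt_def.1 h).2

/-- The partial sums of the vertex variables along `τ` agree with forms `R^ε_{τ,i}` modulo `N_τ`:
a direction `i` used in the step from `τ_s` to `τ_{s+1}` has lower endpoint exactly at
`τ_0, …, τ_s`. -/
lemma sum_le_mem {t : ℕ} (ht : 1 ≤ t) {τ : Fin (t + 1) → GV V} (hτ : IsNondegSimplex V G τ)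
    (a : Fin (t + 1)) :
    ∑ b ∈ Finset.univ.filter (fun b => b ≤ a), (MvPolynomial.X (τ b) : MvPolynomial (GV V) ℤ)
      ∈ Lsub V τ ⊔ Nsub V τ := by
  have hinj := hτ.2.injective
  have hR : ∀ i ∈ Itau V τ, ∀ ε : Bool, ∑ b ∈ Finset.univ.filter
      (fun b => τ b i = (if ε then τ (Fin.last t) else τ 0) i),
        (MvPolynomial.X (τ b) : MvPolynomial (GV V) ℤ) ∈ Lsub V τ ⊔ Nsub V τ := by
    intro i hi ε
    have h1 : Rend V τ i ε ∈ Lsub V τ := Submodule.subset_span ⟨i, hi, ε, rfl⟩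
    have h2 := sum_filter_sub_mem_Nsub hinj
      (fun w : GV V => w i = (if ε then τ (Fin.last t) else τ 0) i)
    have h3 := sub_mem (Submodule.mem_sup_left (T := Nsub V τ) h1)
      (Submodule.mem_sup_right (S := Lsub V τ) h2)
    rw [Rend] at h3
    rwa [sub_sub_cancel] at h3
  have hI : ∀ (s : Fin t) i, τ s.castSucc i < τ s.succ i → i ∈ Itau V τ := fun s i h =>
    mem_Itau.2 ((hτ.1.1 (Fin.zero_le _) i).trans_lt (h.trans_le (hτ.1.1 (Fin.le_last _) i)))
  rcases Fin.eq_castSucc_or_eq_last a with ⟨s, rfl⟩ | rfl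
  · obtain ⟨i, hi⟩ := exists_mem_Iset hτ s
    convert hR i (hI s i hi) false using 2
    ext b
    simp only [Finset.mem_filter, Finset.mem_univ, true_and, Bool.false_eq_true, if_false]
    have hs0 : τ s.castSucc i = τ 0 i :=
      (hτ.1.two_values i _).resolve_right
        (hi.trans_le (hτ.1.1 (Fin.le_last _) i)).ne
    constructor
    · intro hb
      exact le_antisymm (hs0 ▸ hτ.1.1 hb i) (hτ.1.1 (Fin.zero_le _) i)
    · intro hb
      by_contra hlt
      have : s.succ ≤ b := Fin.castSucc_lt_iff_succ_le.1 (not_le.1 hlt)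
      have h := hi.trans_le (hτ.1.1 this i)
      rw [hb, hs0] at h
      exact lt_irrefl _ h
  · obtain ⟨i, hi⟩ := exists_mem_Iset hτ ⟨0, ht⟩
    have hi' := hI _ i hi
    have hne := (mem_Itau.1 hi').ne
    convert add_mem (hR i hi' false) (hR i hi' true) using 1
    rw [← Finset.sum_filter_add_sum_filter_not _ (fun b => τ b i = τ 0 i)]
    congr 1
    · refine Finset.sum_congr ?_ fun _ _ => rfl
      ext b; simp [Fin.le_last]
    · refine Finset.sum_congr ?_ fun _ _ => rfl
      ext b
      simp only [Finset.mem_filter, Finset.mem_univ, true_and, Fin.le_last, if_true]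
      constructor
      · exact (hτ.1.two_values i b).resolve_left
      · intro h h'; exact hne (h'.symm.trans h)

/-- For a simplex of positive dimension the forms `R^ε_{τ,i}` span all linear forms modulo those
supported off `τ`. -/
lemma X_mem_sup {t : ℕ} (ht : 1 ≤ t) {τ : Fin (t + 1) → GV V} (hτ : IsNondegSimplex V G τ)
    (v : GV V) : (MvPolynomial.X v : MvPolynomial (GV V) ℤ) ∈ Lsub V τ ⊔ Nsub V τ := by
  by_cases hv : v ∈ Set.range τ
  · obtain ⟨a, rfl⟩ := hv
    have h1 := sum_le_mem ht hτ a
    induction a using Fin.cases with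
    | zero =>
      convert h1 using 1
      rw [eq_comm, Finset.sum_eq_single 0] <;> simp +contextual
    | succ s =>
      convert sub_mem h1 (sum_le_mem ht hτ s.castSucc) using 1
      rw [eq_sub_iff_add_eq']
      have : Finset.univ.filter (fun b => b ≤ s.succ)
          = insert s.succ (Finset.univ.filter (fun b => b ≤ s.castSucc)) := by
        ext b
        simp only [Finset.mem_filter, Finset.mem_univ, true_and, Finset.mem_insert, Fin.le_def,
          Fin.ext_iff, Fin.val_succ, Fin.val_castSucc]
        omega
      rw [this, Finset.sum_insert (by simp [Fin.le_def]), add_comm]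
  · exact Submodule.mem_sup_right (Submodule.subset_span ⟨v, hv, rfl⟩)

/-- The part of `I_rat` supported on simplices of positive dimension: the cofactor `w` may be an
arbitrary form of the right degree, not only a product of the `R^ε_{τ,i}`. -/
lemma Cmon_mul_mul_mem_Jsub_one {k : ℕ} (m : ℕ) : ∀ {t n : ℕ} {τ : Fin (t + 1) → GV V},
    IsNondegSimplex V G τ → 1 ≤ t → t + m + (n + 1) = k →
    ∀ w ∈ homogeneousSubmodule (GV V) ℤ 1 ^ m, ∀ q ∈ Lsub V τ ^ (n + 1),
      Cmon V τ * (w * q) ∈ Jsub V G k 1 := by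
  induction m with
  | zero =>
    intro t n τ hτ ht hk w hw q hq
    refine Cmon_mul_mem_Jsub (m := n) hτ ht (by omega) ?_
    have := Submodule.mul_mem_mul hw hq
    rwa [pow_zero, one_mul] at this
  | succ m ih =>
    intro t n τ hτ ht hk w hw q hq
    rw [pow_succ'] at hw
    induction hw using Submodule.mul_induction_on' with
    | mem_mul_mem a ha b hb =>
      have ha' : a ∈ Lsub V τ ⊔ Nsub V τ := by
        rw [homogeneousSubmodule_one_eq_span_X] at ha
        refine Submodule.span_le.2 ?_ ha
        rintro _ ⟨v, rfl⟩
        exact X_mem_sup ht hτ v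
      obtain ⟨x, hx, y, hy, rfl⟩ := Submodule.mem_sup.1 ha'
      have e : Cmon V τ * ((x + y) * b * q)
          = Cmon V τ * (b * (x * q)) + Cmon V τ * y * (b * q) := by ring
      rw [e]
      refine add_mem ?_ ?_
      · refine ih (n := n + 1) hτ ht (by omega) b hb _ ?_
        rw [pow_succ']
        exact Submodule.mul_mem_mul hx hq
      · refine Cmon_mul_Nsub_mul_mem hτ (fun τ' hτ' hsub => ?_) hy
        exact ih (n := n) hτ' (by omega) (by omega) b hb q
          (pow_le_pow_left' (Lsub_le_of_range_subset hτ'.1 hsub) _ hq)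
    | add x _ y _ hx hy => rw [add_mul, mul_add]; exact add_mem hx hy

end Algebra
end ChowGS
namespace ChowGS

set_option linter.unusedSectionVars false

section Restriction

variable {d : ℕ}
variable {V : Fin d → Type} [∀ i, Fintype (V i)] [∀ i, LinearOrder (V i)]
variable {G : ∀ i, SimpleGraph (V i)}

/-! ### Restriction to the vertices of a simplex -/

open Classical in
/-- `ψ_τ`: the restriction to `τ`, the ring endomorphism of `Z(𝒢)` fixing `C_v` for every
vertex `v` of `τ` and sending the other generators to zero. -/
noncomputable def psi {t : ℕ} (τ : Fin (t + 1) → GV V) :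
    MvPolynomial (GV V) ℤ →ₐ[ℤ] MvPolynomial (GV V) ℤ :=
  aeval fun v => if v ∈ Set.range τ then MvPolynomial.X v else 0

lemma psi_X_of_notMem {t : ℕ} {τ : Fin (t + 1) → GV V} {v : GV V} (hv : v ∉ Set.range τ) :
    psi τ (MvPolynomial.X v) = 0 := by
  rw [psi, aeval_X, if_neg hv]

/-- Every algebra map killing the vertices outside a simplex kills `I_1`, since a list of vertices
of that simplex always forms a simplex. -/
lemma map_Ione_eq_zero {t : ℕ} {τ : Fin (t + 1) → GV V} (hτ : IsSimplexChain V G τ)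
    {A : Type*} [CommRing A] [Algebra ℤ A] (φ : MvPolynomial (GV V) ℤ →ₐ[ℤ] A)
    (hφ : ∀ v, v ∉ Set.range τ → φ (MvPolynomial.X v) = 0)
    {f : MvPolynomial (GV V) ℤ} (hf : f ∈ Ione V G) : φ f = 0 := by
  have : Ione V G ≤ RingHom.ker φ := by
    refine Ideal.span_le.2 ?_
    rintro _ ⟨l, hl, rfl⟩
    have : ∃ v ∈ l, v ∉ Set.range τ := by
      by_contra! hcon
      exact hl (formsSimplex_of_forall_mem hτ hcon)
    obtain ⟨v, hv, hv'⟩ := this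
    rw [SetLike.mem_coe, RingHom.mem_ker, map_list_prod]
    refine List.prod_eq_zero (List.mem_map.2 ⟨_, List.mem_map_of_mem hv, hφ v hv'⟩)
  exact this hf

lemma map_Cmon_eq_zero {t : ℕ} {τ : Fin (t + 1) → GV V}
    {A : Type*} [CommRing A] [Algebra ℤ A] (φ : MvPolynomial (GV V) ℤ →ₐ[ℤ] A) (b : Fin (t + 1))
    (hb : φ (MvPolynomial.X (τ b)) = 0) : φ (Cmon V τ) = 0 := by
  rw [Cmon, map_prod]
  exact Finset.prod_eq_zero (Finset.mem_univ b) hb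

lemma psi_Cmon {t : ℕ} (τ : Fin (t + 1) → GV V) : psi τ (Cmon V τ) = Cmon V τ := by
  rw [Cmon, map_prod]
  refine Finset.prod_congr rfl fun b _ => ?_
  rw [psi, aeval_X, if_pos (Set.mem_range_self b)]

lemma Cmon_ne_zero {t : ℕ} (τ : Fin (t + 1) → GV V) : Cmon V τ ≠ 0 :=
  Finset.prod_ne_zero_iff.2 fun _ _ => X_ne_zero _

/-- An inclusion of vertex sets of nondegenerate simplices bounds the dimension, and is an equality
when the dimensions agree. -/
lemma dim_le_of_range_subset {t t' : ℕ} {τ : Fin (t + 1) → GV V} {τ' : Fin (t' + 1) → GV V}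
    (hτ : StrictMono τ) (hτ' : StrictMono τ') (hsub : Set.range τ' ⊆ Set.range τ) :
    t' ≤ t ∧ (t ≤ t' → Set.range τ' = Set.range τ) := by
  have h1 := Set.ncard_range_of_injective hτ.injective
  have h2 := Set.ncard_range_of_injective hτ'.injective
  rw [Nat.card_eq_fintype_card, Fintype.card_fin] at h1 h2
  have h3 := Set.ncard_le_ncard hsub (Set.finite_range τ)
  refine ⟨by omega, fun h => Set.eq_of_subset_of_ncard_le hsub (by omega) (Set.finite_range τ)⟩

/-- A form `q` in the `R^ε_{τ,i}` restricting to zero on `τ` is a sum of products of a factor in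
`N_τ` with factors in `L_τ`. Choosing for every vertex `v` of `τ` a form in `L_τ` congruent to
`C_v` modulo `N_τ` defines an algebra map `Θ` factoring through `ψ_τ`; then `q = q - Θ q`, and
`p - Θ p` telescopes for `p` in a power of `L_τ`. -/
lemma mem_mul_pow_of_psi_eq_zero {t : ℕ} (ht : 1 ≤ t) {τ : Fin (t + 1) → GV V}
    (hτ : IsNondegSimplex V G τ) {m : ℕ} {q : MvPolynomial (GV V) ℤ}
    (hq : q ∈ Lsub V τ ^ (m + 1)) (h0 : psi τ q = 0) : q ∈ Nsub V τ * Lsub V τ ^ m := by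
  classical
  have hy : ∀ v : GV V, ∃ y ∈ Lsub V τ, MvPolynomial.X v - y ∈ Nsub V τ ∧
      (v ∉ Set.range τ → y = 0) := by
    intro v
    by_cases hv : v ∈ Set.range τ
    · obtain ⟨y, hy, n, hn, e⟩ := Submodule.mem_sup.1 (X_mem_sup ht hτ v)
      exact ⟨y, hy, by rwa [← e, add_sub_cancel_left], fun h => absurd hv h⟩
    · exact ⟨0, zero_mem _, by rw [sub_zero]; exact Submodule.subset_span ⟨v, hv, rfl⟩,
        fun _ => rfl⟩
  choose y hyL hyN hy0 using hy
  let Θ : MvPolynomial (GV V) ℤ →ₐ[ℤ] MvPolynomial (GV V) ℤ := aeval y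
  have hΘψ : ∀ f, Θ (psi τ f) = Θ f := by
    intro f
    have : Θ.comp (psi τ) = Θ := by
      ext1 v
      simp only [AlgHom.comp_apply, psi, aeval_X]
      split_ifs with hv
      · rfl
      · rw [map_zero, aeval_X, hy0 v hv]
    exact DFunLike.congr_fun this f
  have hL : ∀ r ∈ Lsub V τ, Θ r ∈ Lsub V τ ∧ r - Θ r ∈ Nsub V τ := by
    intro r hr
    induction hr using Submodule.span_induction with
    | mem x hx =>
      obtain ⟨i, hi, ε, rfl⟩ := hx
      rw [Rend, map_sum, ← Finset.sum_sub_distrib]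
      constructor
      · exact Submodule.sum_mem _ fun w _ => by rw [aeval_X]; exact hyL w
      · exact Submodule.sum_mem _ fun w _ => by rw [aeval_X]; exact hyN w
    | zero => simp
    | add a b _ _ ha hb =>
      rw [map_add, add_sub_add_comm]
      exact ⟨add_mem ha.1 hb.1, add_mem ha.2 hb.2⟩
    | smul c a _ ha =>
      rw [map_smul, ← smul_sub]
      exact ⟨Submodule.smul_mem _ c ha.1, Submodule.smul_mem _ c ha.2⟩
  have key : ∀ m, ∀ p ∈ Lsub V τ ^ (m + 1), p - Θ p ∈ Nsub V τ * Lsub V τ ^ m := by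
    intro m
    induction m with
    | zero =>
      intro p hp
      rw [zero_add, pow_one] at hp
      rw [pow_zero, mul_one]
      exact (hL p hp).2
    | succ m ih =>
      intro p hp
      rw [pow_succ'] at hp
      induction hp using Submodule.mul_induction_on' with
      | mem_mul_mem a ha b hb =>
        have e : a * b - Θ (a * b) = (a - Θ a) * b + Θ a * (b - Θ b) := by
          rw [map_mul]; ring
        rw [e]
        refine add_mem (Submodule.mul_mem_mul (hL a ha).2 hb) ?_
        rw [pow_succ', mul_left_comm]
        exact Submodule.mul_mem_mul (hL a ha).1 (ih b hb)
      | add x _ z _ hx hz => rw [map_add, add_sub_add_comm]; exact add_mem hx hz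
  have h := key m q hq
  rwa [← hΘψ q, h0, map_zero, sub_zero] at h

lemma map_Znd_eq_zero {k : ℕ} {A : Type*} [CommRing A] [Algebra ℤ A] (φ : MvPolynomial (GV V) ℤ →ₐ[ℤ] A)
    (hφ : ∀ σ : Fin (k + 1) → GV V, IsNondegSimplex V G σ → φ (Cmon V σ) = 0)
    {f : MvPolynomial (GV V) ℤ} (hf : f ∈ Znd V G k) : φ f = 0 := by
  induction hf using Submodule.span_induction with
  | mem x hx =>
    obtain ⟨σ, hσ, rfl⟩ := hx
    exact hφ σ hσ
  | zero => exact map_zero _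
  | add a b _ _ ha hb => rw [map_add, ha, hb, add_zero]
  | smul c a _ ha => rw [map_zsmul, ha, smul_zero]

lemma map_Jsub_eq_zero {k l t : ℕ} {τ : Fin (t + 1) → GV V} (hτ : IsSimplexChain V G τ)
    {A : Type*} [CommRing A] [Algebra ℤ A] (φ : MvPolynomial (GV V) ℤ →ₐ[ℤ] A)
    (hφ : ∀ v, v ∉ Set.range τ → φ (MvPolynomial.X v) = 0)
    (hφ' : ∀ t', l ≤ t' → ∀ σ : Fin (t' + 1) → GV V, IsNondegSimplex V G σ → φ (Cmon V σ) = 0)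
    {f : MvPolynomial (GV V) ℤ} (hf : f ∈ Jsub V G k l) : φ f = 0 := by
  obtain ⟨a, ha, b, hb, rfl⟩ := Submodule.mem_sup.1 hf
  have ha' : φ a = 0 := map_Ione_eq_zero hτ φ hφ (by simpa using ha)
  rw [map_add, ha', zero_add]
  clear hf
  induction hb using Submodule.span_induction with
  | mem x hx =>
    obtain ⟨t', ht', -, σ, hσ, S, -, rfl⟩ := hx
    rw [map_mul, hφ' t' ht' σ hσ, zero_mul]
  | zero => exact map_zero _
  | add a b _ _ ha hb => rw [map_add, ha, hb, add_zero]
  | smul c a _ ha => rw [map_zsmul, ha, smul_zero]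

/-! ### Raising the filtration level -/

lemma psi_Cmon_eq_zero {t t' : ℕ} {τ : Fin (t + 1) → GV V} {τ' : Fin (t' + 1) → GV V}
    (h : ¬ Set.range τ' ⊆ Set.range τ) : psi τ (Cmon V τ') = 0 := by
  obtain ⟨_, ⟨b, rfl⟩, hb⟩ := Set.not_subset.1 h
  exact map_Cmon_eq_zero _ b (psi_X_of_notMem hb)

open Classical in
/-- Elements of `J_l` are, modulo `J_{l+1}`, sums of terms `C_τ q_τ` over the nondegenerate
`l`-simplices, with `q_τ` a form of degree `k - l` in the `R^ε_{τ,i}`. -/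
lemma exists_decomposition {l m : ℕ} {f : MvPolynomial (GV V) ℤ}
    (hf : f ∈ Jsub V G (l + (m + 1)) l) :
    ∃ q : {τ : Fin (l + 1) → GV V // IsNondegSimplex V G τ} → MvPolynomial (GV V) ℤ,
      (∀ τ, q τ ∈ Lsub V τ.1 ^ (m + 1)) ∧
      f - ∑ τ, Cmon V τ.1 * q τ ∈ Jsub V G (l + (m + 1)) (l + 1) := by
  obtain ⟨a, ha, b, hb, rfl⟩ := Submodule.mem_sup.1 hf
  have ha' : a ∈ Jsub V G (l + (m + 1)) (l + 1) := Submodule.mem_sup_left ha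
  clear hf
  suffices h : ∃ q : {τ : Fin (l + 1) → GV V // IsNondegSimplex V G τ} → MvPolynomial (GV V) ℤ,
      (∀ τ, q τ ∈ Lsub V τ.1 ^ (m + 1)) ∧
      b - ∑ τ, Cmon V τ.1 * q τ ∈ Jsub V G (l + (m + 1)) (l + 1) by
    obtain ⟨q, hq, hb⟩ := h
    exact ⟨q, hq, by rw [add_sub_assoc]; exact add_mem ha' hb⟩
  induction hb using Submodule.span_induction with
  | mem x hx =>
    obtain ⟨t, ht, htk, τ, hτ, S, hS, rfl⟩ := hx
    rcases eq_or_lt_of_le ht with rfl | hlt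
    · refine ⟨Pi.single ⟨τ, hτ⟩ (Rprod V τ S), ?_, ?_⟩
      · intro τ'
        by_cases h : τ' = ⟨τ, hτ⟩
        · subst h
          rw [Pi.single_eq_same, Rprod, Lsub]
          have hc : m + 1 = Multiset.card S := by rw [hS.1]; omega
          rw [hc]
          clear hc
          have hS2 := hS.2
          clear hS
          induction S using Multiset.induction_on with
          | empty => simp
          | cons p S ih =>
            rw [Multiset.map_cons, Multiset.prod_cons, Multiset.card_cons, pow_succ']
            refine Submodule.mul_mem_mul (Submodule.subset_span ⟨p.1, ?_, p.2, rfl⟩)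
              (ih fun p' hp' => hS2 p' (Multiset.mem_cons_of_mem hp'))
            exact hS2 p (Multiset.mem_cons_self p S)
        · rw [Pi.single_eq_of_ne h]; exact zero_mem _
      · rw [Finset.sum_eq_single ⟨τ, hτ⟩]
        · rw [Pi.single_eq_same, sub_self]; exact zero_mem _
        · intro τ' _ h
          rw [Pi.single_eq_of_ne h, mul_zero]
        · intro h; exact absurd (Finset.mem_univ _) h
    · refine ⟨0, fun _ => zero_mem _, ?_⟩
      simp only [Pi.zero_apply, mul_zero, Finset.sum_const_zero, sub_zero]
      exact Submodule.mem_sup_right (Submodule.subset_span ⟨t, hlt, htk, τ, hτ, S, hS, rfl⟩)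
  | zero => exact ⟨0, fun _ => zero_mem _, by simp⟩
  | add x y _ _ hx hy =>
    obtain ⟨q, hq, hx⟩ := hx
    obtain ⟨r, hr, hy⟩ := hy
    refine ⟨q + r, fun τ => add_mem (hq τ) (hr τ), ?_⟩
    convert add_mem hx hy using 1
    simp only [Pi.add_apply, mul_add, Finset.sum_add_distrib]
    ring
  | smul c x _ hx =>
    obtain ⟨q, hq, hx⟩ := hx
    refine ⟨c • q, fun τ => Submodule.smul_mem _ c (hq τ), ?_⟩
    convert Submodule.smul_mem _ c hx using 1
    simp only [Pi.smul_apply, mul_smul_comm, ← Finset.smul_sum, smul_sub]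

/-- The inductive step: a combination of nondegenerate `k`-simplices in `J_l`, `1 ≤ l ≤ k - 2`,
lies in `J_{l+1}`, since its restriction to every `l`-simplex vanishes. -/
lemma mem_Jsub_succ {l m : ℕ} (hl : 1 ≤ l) {f : MvPolynomial (GV V) ℤ}
    (hZ : f ∈ Znd V G (l + (m + 1 + 1))) (hf : f ∈ Jsub V G (l + (m + 1 + 1)) l) :
    f ∈ Jsub V G (l + (m + 1 + 1)) (l + 1) := by
  classical
  obtain ⟨q, hq, h⟩ := exists_decomposition hf
  rw [← sub_add_cancel f (∑ τ, Cmon V τ.1 * q τ)]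
  refine add_mem h (Submodule.sum_mem _ fun τ _ => ?_)
  have hbig : ∀ t', l + 1 ≤ t' → ∀ σ : Fin (t' + 1) → GV V, IsNondegSimplex V G σ →
      psi τ.1 (Cmon V σ) = 0 := by
    intro t' ht' σ hσ
    refine psi_Cmon_eq_zero fun hsub => ?_
    have := (dim_le_of_range_subset τ.2.2 hσ.2 hsub).1
    omega
  have h1 : psi τ.1 f = 0 := map_Znd_eq_zero _ (hbig _ (by omega)) hZ
  have h2 := map_Jsub_eq_zero τ.2.1 (psi τ.1) (fun v hv => psi_X_of_notMem hv) hbig h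
  rw [map_sub, h1, zero_sub, neg_eq_zero, map_sum, Finset.sum_eq_single τ] at h2
  · rw [map_mul, psi_Cmon] at h2
    have h3 := (mul_eq_zero.1 h2).resolve_left (Cmon_ne_zero _)
    have h4 := mem_mul_pow_of_psi_eq_zero hl τ.2 (hq τ) h3
    generalize q τ = p at h4
    induction h4 using Submodule.mul_induction_on' with
    | mem_mul_mem n hn p hp =>
      rw [← mul_assoc]
      refine Cmon_mul_Nsub_mul_mem τ.2 (fun τ' hτ' hsub => ?_) hn
      exact Cmon_mul_mem_Jsub (m := m) hτ' le_rfl (by omega)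
        (pow_le_pow_left' (Lsub_le_of_range_subset hτ'.1 hsub) _ hp)
    | add x _ y _ hx hy => rw [mul_add]; exact add_mem hx hy
  · intro τ' _ hne
    rw [map_mul, psi_Cmon_eq_zero, zero_mul]
    intro hsub
    exact hne (Subtype.ext
      ((StrictMono.range_inj τ'.2.2 τ.2.2).1 ((dim_le_of_range_subset τ.2.2 τ'.2.2 hsub).2 le_rfl)))
  · intro h; exact absurd (Finset.mem_univ _) h

end Restriction
end ChowGS
namespace ChowGS

set_option linter.unusedSectionVars false

section Base

variable {d : ℕ}
variable {V : Fin d → Type} [∀ i, Fintype (V i)] [∀ i, LinearOrder (V i)]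
variable {G : ∀ i, SimpleGraph (V i)}

/-! ### Elements of the ideal of rational equivalence -/

/-- To control one homogeneous component of the multiples of a homogeneous `g`, it suffices to
consider the multiples by monomials of complementary degree. -/
lemma homogeneousComponent_mul_mem {σ : Type*} {D : Submodule ℤ (MvPolynomial σ ℤ)} {n e : ℕ}
    {g : MvPolynomial σ ℤ} (hg : g ∈ homogeneousSubmodule σ ℤ e)
    (h : ∀ s : σ →₀ ℕ, s.degree + e = n → monomial s (1 : ℤ) * g ∈ D) (p : MvPolynomial σ ℤ) :
    homogeneousComponent n (p * g) ∈ D := by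
  induction p using MvPolynomial.induction_on' with
  | monomial s a =>
    have hs : monomial s (1 : ℤ) * g ∈ homogeneousSubmodule σ ℤ (s.degree + e) :=
      (isHomogeneous_monomial 1 rfl).mul hg
    have e1 : monomial s a * g = a • (monomial s (1 : ℤ) * g) := by
      rw [← smul_mul_assoc, smul_monomial, smul_eq_mul, mul_one]
    rw [e1, map_smul, homogeneousComponent_of_mem hs]
    refine Submodule.smul_mem _ _ ?_
    split_ifs with hn
    · exact h s hn.symm
    · exact zero_mem _
  | add p q hp hq => rw [add_mul, map_add]; exact add_mem hp hq

lemma sum_X_mem {s : Finset (GV V)} :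
    ∑ v ∈ s, (MvPolynomial.X v : MvPolynomial (GV V) ℤ) ∈ homogeneousSubmodule (GV V) ℤ 1 :=
  Submodule.sum_mem _ fun v _ => isHomogeneous_X ℤ v

lemma list_prod_mem (l : List (GV V)) :
    (l.map MvPolynomial.X).prod ∈ homogeneousSubmodule (GV V) ℤ l.length := by
  induction l with
  | nil => exact isHomogeneous_one (GV V) ℤ
  | cons v l ih =>
    rw [List.map_cons, List.prod_cons, List.length_cons, add_comm]
    exact (isHomogeneous_X ℤ v).mul ih

lemma Cmon_mem {k : ℕ} (σ : Fin (k + 1) → GV V) :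
    Cmon V σ ∈ homogeneousSubmodule (GV V) ℤ (k + 1) := by
  have := list_prod_mem (List.ofFn σ)
  rwa [← Cmon_eq_list_prod, List.length_ofFn] at this

lemma Znd_le {k : ℕ} : Znd V G k ≤ homogeneousSubmodule (GV V) ℤ (k + 1) := by
  refine Submodule.span_le.2 ?_
  rintro _ ⟨σ, -, rfl⟩
  exact Cmon_mem σ

/-- Multiples of (R3): if `u_i ≠ w_i` then `C_u C_w` is either killed by (R1) or the monomial of
an edge `τ` of `𝒢` with `i ∈ I(τ)`, and the remaining factor is one of the two `R^ε_{τ,i}`. -/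
lemma mul_R3_mem {n : ℕ} {u w : GV V} {i : Fin d} (hi : u i ≠ w i) {p : MvPolynomial (GV V) ℤ}
    (hp : p ∈ homogeneousSubmodule (GV V) ℤ n) :
    p * (MvPolynomial.X u * MvPolynomial.X w *
      ∑ v ∈ Finset.univ.filter (fun v : GV V => v i = u i), MvPolynomial.X v)
      ∈ Jsub V G (n + 2) 1 := by
  by_cases hs : FormsSimplex V G [u, w]
  · obtain ⟨τ, hτ, hC, hends⟩ := exists_edge_of_formsSimplex (fun h => hi (by rw [h])) hs
    have hit : i ∈ Itau V τ := by
      rw [mem_Itau]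
      refine lt_of_le_of_ne (hτ.1.1 (Fin.zero_le _) i) ?_
      rcases hends with ⟨h0, h1⟩ | ⟨h0, h1⟩
      · rw [h0, h1]; exact hi
      · rw [h0, h1]; exact hi.symm
    have hR : ∑ v ∈ Finset.univ.filter (fun v : GV V => v i = u i),
        (MvPolynomial.X v : MvPolynomial (GV V) ℤ) ∈ Lsub V τ := by
      rcases hends with ⟨h0, -⟩ | ⟨-, h1⟩
      · exact Submodule.subset_span ⟨i, hit, false, by simp [Rend, h0]⟩
      · exact Submodule.subset_span ⟨i, hit, true, by rw [Rend, if_pos rfl, h1]⟩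
    rw [← hC, mul_left_comm]
    refine Cmon_mul_mul_mem_Jsub_one (n := 0) n hτ le_rfl (by omega) p ?_ _ ?_
    · rwa [homogeneousSubmodule_one_pow]
    · rwa [zero_add, pow_one]
  · refine Ione_le_Jsub (Ideal.mul_mem_left _ _ (Ideal.mul_mem_right _ _ ?_))
    exact Ideal.subset_span ⟨_, hs, by simp⟩

/-- Multiples of (R2) by a second vertex: for `u_i ≠ w_i`, modulo (R1) the sum of all `C_v` may be
replaced by the sum over those `v` with `v_i = u_i` or `v_i = w_i`. -/
lemma mul_R2_mem {n : ℕ} {u w : GV V} (hne : u ≠ w) {p : MvPolynomial (GV V) ℤ}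
    (hp : p ∈ homogeneousSubmodule (GV V) ℤ n) :
    p * (MvPolynomial.X u * MvPolynomial.X w * ∑ v : GV V, MvPolynomial.X v)
      ∈ Jsub V G (n + 2) 1 := by
  obtain ⟨i, hi⟩ := Function.ne_iff.1 hne
  have h1 := mul_R3_mem (G := G) hi hp
  have h2 := mul_R3_mem (G := G) hi.symm hp
  have h3 : p * (MvPolynomial.X u * MvPolynomial.X w *
      ∑ v ∈ Finset.univ.filter (fun v : GV V => ¬ (v i = u i ∨ v i = w i)), MvPolynomial.X v)
      ∈ Jsub V G (n + 2) 1 := by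
    refine Ione_le_Jsub (Ideal.mul_mem_left _ _ ?_)
    by_cases hs : FormsSimplex V G [u, w]
    · obtain ⟨τ, hτ, hC, hends⟩ := exists_edge_of_formsSimplex hne hs
      have hit : i ∈ Itau V τ := by
        rw [mem_Itau]
        refine lt_of_le_of_ne (hτ.1.1 (Fin.zero_le _) i) ?_
        rcases hends with ⟨h0, h1⟩ | ⟨h0, h1⟩
        · rw [h0, h1]; exact hi
        · rw [h0, h1]; exact hi.symm
      rw [← hC, Finset.mul_sum]
      refine Ideal.sum_mem _ fun v hv => ?_
      have hv' := (Finset.mem_filter.1 hv).2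
      push Not at hv'
      rcases hends with ⟨h0, h1⟩ | ⟨h0, h1⟩
      · exact Cmon_mul_X_mem_Ione hit (h0 ▸ hv'.1) (h1 ▸ hv'.2)
      · exact Cmon_mul_X_mem_Ione hit (h0 ▸ hv'.2) (h1 ▸ hv'.1)
    · exact Ideal.mul_mem_right _ _ (Ideal.subset_span ⟨_, hs, by simp⟩)
  convert add_mem (add_mem h1 h2) h3 using 1
  have hsplit : ∑ v : GV V, (MvPolynomial.X v : MvPolynomial (GV V) ℤ)
      = ∑ v ∈ Finset.univ.filter (fun v : GV V => v i = u i), MvPolynomial.X v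
        + ∑ v ∈ Finset.univ.filter (fun v : GV V => v i = w i), MvPolynomial.X v
        + ∑ v ∈ Finset.univ.filter (fun v : GV V => ¬ (v i = u i ∨ v i = w i)),
          MvPolynomial.X v := by
    rw [← Finset.sum_filter_add_sum_filter_not Finset.univ
      (fun v : GV V => v i = u i ∨ v i = w i), Finset.filter_or, Finset.sum_union]
    rw [Finset.disjoint_filter]
    intro v _ h h'
    exact hi (h.symm.trans h')
  rw [hsplit]
  ring

/-- Modulo `J_1`, an element of degree `k + 1 ≥ 3` rationally equivalent to zero is a combination
of the elements `C_u^k · ∑_v C_v`. -/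
lemma exists_of_mem_Irat {n : ℕ} {f : MvPolynomial (GV V) ℤ} (hf : f ∈ Irat V G)
    (hh : f ∈ homogeneousSubmodule (GV V) ℤ (n + 2 + 1)) :
    ∃ c : GV V → ℤ, f - ∑ u, c u • (MvPolynomial.X u ^ (n + 2) * ∑ v : GV V, MvPolynomial.X v)
      ∈ Jsub V G (n + 2) 1 := by
  classical
  let e : GV V → MvPolynomial (GV V) ℤ := fun u =>
    MvPolynomial.X u ^ (n + 2) * ∑ v : GV V, MvPolynomial.X v
  let D : Submodule ℤ (MvPolynomial (GV V) ℤ) :=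
    Jsub V G (n + 2) 1 ⊔ Submodule.span ℤ (Set.range e)
  have hD : ∀ g ∈ Irat V G, ∀ p, homogeneousComponent (n + 2 + 1) (p * g) ∈ D := by
    intro g hg
    induction hg using Submodule.span_induction with
    | mem g hg =>
      rcases hg with (⟨l, hl, rfl⟩ | ⟨u, rfl⟩) | ⟨u, w, i, hi, rfl⟩
      · refine homogeneousComponent_mul_mem (list_prod_mem l) fun s _ => ?_
        exact Submodule.mem_sup_left (Ione_le_Jsub
          (Ideal.mul_mem_left _ _ (Ideal.subset_span ⟨l, hl, rfl⟩)))
      · refine homogeneousComponent_mul_mem (e := 2)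
          ((isHomogeneous_X ℤ u).mul sum_X_mem) fun s hs => ?_
        by_cases hsu : ∃ w, w ≠ u ∧ s w ≠ 0
        · obtain ⟨w, hwu, hw⟩ := hsu
          have hle : Finsupp.single w 1 ≤ s := by
            rw [Finsupp.single_le_iff]; omega
          have hs' : s = Finsupp.single w 1 + (s - Finsupp.single w 1) :=
            (add_tsub_cancel_of_le hle).symm
          generalize s - Finsupp.single w 1 = s' at hs'
          subst hs'
          have hdeg : s'.degree = n := by
            rw [map_add, Finsupp.degree_single] at hs
            omega
          have h := mul_R2_mem (G := G) (Ne.symm hwu) (isHomogeneous_monomial (1 : ℤ) hdeg)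
          refine Submodule.mem_sup_left ?_
          convert h using 1
          rw [← one_mul (1 : ℤ), ← monomial_mul, one_mul]
          change MvPolynomial.X w * _ * _ = _
          ring
        · push Not at hsu
          have hs' : s = Finsupp.single u (n + 1) := by
            have : s = Finsupp.single u (s u) := by
              ext w
              by_cases h : w = u
              · subst h; simp
              · rw [hsu w h, Finsupp.single_eq_of_ne h]
            rw [this, Finsupp.degree_single] at hs
            rw [this]
            congr 1
            omega
          refine Submodule.mem_sup_right (Submodule.subset_span ⟨u, ?_⟩)
          rw [hs', ← X_pow_eq_monomial]
          simp only [e]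
          ring
      · refine homogeneousComponent_mul_mem (e := 3)
          (((isHomogeneous_X ℤ u).mul (isHomogeneous_X ℤ w)).mul sum_X_mem) fun s hs => ?_
        exact Submodule.mem_sup_left
          (mul_R3_mem hi (isHomogeneous_monomial (1 : ℤ) (by omega)))
    | zero => intro p; simp
    | add x y _ _ hx hy =>
      intro p
      rw [mul_add, map_add]
      exact add_mem (hx p) (hy p)
    | smul a x _ hx =>
      intro p
      rw [smul_eq_mul, ← mul_assoc]
      exact hx (p * a)
  have hfD := hD f hf 1
  rw [one_mul, homogeneousComponent_of_mem hh, if_pos rfl] at hfD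
  obtain ⟨j, hj, y, hy, rfl⟩ := Submodule.mem_sup.1 hfD
  obtain ⟨c, rfl⟩ := (Submodule.mem_span_range_iff_exists_fun ℤ).1 hy
  exact ⟨c, by rwa [add_sub_cancel_right]⟩

/-- A combination of nondegenerate `k`-simplices, `k ≥ 2`, rationally equivalent to zero lies in
`J_1`: setting `C_u = 1` and the other generators to zero detects the coefficient of
`C_u^k · ∑_v C_v`. -/
lemma mem_Jsub_one {n : ℕ} {f : MvPolynomial (GV V) ℤ} (hZ : f ∈ Znd V G (n + 2))
    (hf : f ∈ Irat V G) : f ∈ Jsub V G (n + 2) 1 := by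
  classical
  obtain ⟨c, hc⟩ := exists_of_mem_Irat hf (Znd_le hZ)
  suffices h : ∀ u, c u = 0 by
    simpa [h] using hc
  intro u
  let φ : MvPolynomial (GV V) ℤ →ₐ[ℤ] ℤ := aeval fun v => if v = u then 1 else 0
  have hφX : ∀ v, φ (MvPolynomial.X v) = if v = u then 1 else 0 := fun v => aeval_X _ _
  have hchain : IsSimplexChain V G (fun _ : Fin (0 + 1) => u) :=
    ⟨monotone_const, fun j => j.elim0, fun j => j.elim0⟩
  have hbig : ∀ t', 1 ≤ t' → ∀ σ : Fin (t' + 1) → GV V, IsNondegSimplex V G σ →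
      φ (Cmon V σ) = 0 := by
    intro t' ht' σ hσ
    have : ∃ b, σ b ≠ u := by
      by_contra! hcon
      have h := hσ.2.injective ((hcon 0).trans (hcon (Fin.last t')).symm)
      rw [Fin.ext_iff, Fin.val_last, Fin.val_zero] at h
      omega
    obtain ⟨b, hb⟩ := this
    exact map_Cmon_eq_zero φ b (by rw [hφX, if_neg hb])
  have h1 : φ f = 0 := map_Znd_eq_zero φ (hbig _ (by omega)) hZ
  have h2 := map_Jsub_eq_zero hchain φ (fun v hv => by
    rw [hφX, if_neg]
    rintro rfl
    exact hv ⟨0, rfl⟩) hbig hc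
  rw [map_sub, h1, zero_sub, neg_eq_zero, map_sum, Finset.sum_eq_single u] at h2
  · simpa [hφX] using h2
  · intro w _ hw
    rw [map_smul, map_mul, map_pow, hφX, if_neg hw, zero_pow (by omega), zero_mul, smul_zero]
  · intro h; exact absurd (Finset.mem_univ _) h

/-- The induction on the filtration level, from `J_1` up to `J_{k-1}` with `k = n + 2`. -/
lemma mem_Jsub {n : ℕ} {f : MvPolynomial (GV V) ℤ} (hZ : f ∈ Znd V G (n + 2))
    (hf : f ∈ Irat V G) (l : ℕ) (hl : l ≤ n) : f ∈ Jsub V G (n + 2) (l + 1) := by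
  induction l with
  | zero => exact mem_Jsub_one hZ hf
  | succ l ih =>
    have h := ih (by omega)
    obtain ⟨m, rfl⟩ : ∃ m, n = l + 1 + m := ⟨n - (l + 1), by omega⟩
    have e : l + 1 + m + 2 = (l + 1) + (m + 1 + 1) := by ring
    rw [e] at h hZ ⊢
    exact mem_Jsub_succ (by omega) hZ h

end Base
end ChowGS

/-- **Lemma 3.2**: if an integral combination `α` of monomials of non-degenerate
`k`-simplices is rationally equivalent to zero, then `α` lies in the filtration step
`F^{k−1}`. -/
theorem ChowGS.rationally_trivial_mem_filtration
    {d : ℕ} (hd : 1 ≤ d)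
    (V : Fin d → Type) [∀ i, Fintype (V i)] [∀ i, LinearOrder (V i)]
    (G : ∀ i, SimpleGraph (V i)) (hconn : ∀ i, (G i).Connected)
    (k : ℕ) (hk : 1 ≤ k)
    (α : MvPolynomial (ChowGS.GV V) ℤ)
    (hα : α ∈ ChowGS.Znd V G k) (hrat : α ∈ ChowGS.Irat V G) :
    α ∈ ChowGS.Fstep V G k (k - 1) := by
  rcases Nat.lt_or_ge 1 k with h | h
  · obtain ⟨n, rfl⟩ : ∃ n, k = n + 2 := ⟨k - 2, by omega⟩
    rw [ChowGS.Fstep, if_neg (by omega), if_neg (by omega)]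
    obtain ⟨β, hβ, γ, hγ, rfl⟩ := Submodule.mem_sup.1 (ChowGS.mem_Jsub hα hrat n le_rfl)
    exact ⟨β, by simpa using hβ, by rwa [add_sub_cancel_left]⟩
  · obtain rfl : k = 1 := le_antisymm h hk
    rw [ChowGS.Fstep, if_pos rfl]
    exact ⟨hrat, ChowGS.Znd_le hα⟩
end

section
/- Let d ≥ 1 and let □^d = {0,1}^d with the Chow ring Chow(□^d). For any two maximal chains σ_1 : 0 = u_0 < u_1 < … < u_d = 1 and σ_2 : 0 = w_0 < w_1 < … < w_d = 1 in {0,1}^d (the non-degenerate d-simplices), the classes of C_{σ_1} = C_{u_0}⋯C_{u_d} and C_{σ_2} = C_{w_0}⋯C_{w_d} are equal in Chow(□^d). Moreover, the graded piece Chow^{d+1}(□^d) is a free ℤ-module of rank one generated by this common class. -/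
/-!
Chains of `d + 1` vertices in `{0,1}^d` are maximal and their `j`-th vertex has weight `j`.

*Equality of the classes.* Relation (R3) for the pair `0, v` gives, by induction on `a`, that
`C_0^a C_v = 0` whenever `v ≠ 0` has weight below `a` (`cls_bot_pow_mul`). Consequently, for
consecutive vertices `u_k < u_{k+1}` of a maximal chain, only two terms of (R3) for the pair
`0, u_{k+1}` survive multiplication by `C_0^{k-1}`, and
`C_0^k C_{u_k} C_{u_{k+1}} = - C_0^{k+1} C_{u_{k+1}}` (`chain_step`). Removing the vertices one
after the other shows that the class of every maximal chain is `(-1)^{d-1} C_0^d C_1`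
(`chain_class`).

*Generation.* In positive degree the Chow ring is spanned by squarefree monomials: in
`C_x ∏_{v ∈ σ} C_v` with `x ∈ σ`, the relation (R3) for `x` and its predecessor in the chain `σ`
replaces the repeated factor `C_x` by new vertices and by vertices of `σ` above `x`, and (R2) does
the same when `x` is the bottom of `σ` (`cls_mul_prod_mem`). In degree `d + 1` the only nonzero
squarefree monomials are the maximal chains (`piece_le`).

*Freeness.* An explicit functional `degMap` on polynomials kills the ideal and takes the value `1`
on maximal chains. It vanishes on monomials which are not supported on a chain, and on
`C_{v_1}^{a_1} ⋯ C_{v_k}^{a_k}` with `v_1 < ⋯ < v_k` it depends on the weights only. The `a_j - 1`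
surplus factors of `v_j` are to fill the weights missed by the chain: `l_j` of them go into
the gap below `v_j` and the other `r_j` into the gap above, and a gap of `g` missing weights must
receive exactly `g` factors in total. These conditions determine all `l_j` and `r_j` from the
bottom up, and the value is the product of the numbers `(-1)^{a_j - 1} choose (a_j - 1) l_j` and of
the numbers `choose g r`, where `r` is the number of factors which a gap of length `g` receives
from below. Multiplication by the sum of all vertices above a vertex of the chain telescopes by
Pascal's rule (`gap_sum`, `sum_above`), since the vertices of a given weight in an interval are
counted by a binomial coefficient (`card_interval`). This yields the vanishing on (R2)
(`sum_monDeg_univ`) and on (R3) for the facet `v_i = 1` (`sum_monDeg_one`); the facet `v_i = 0` is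
the difference of the two.
-/

open MvPolynomial

namespace ChowCube

/-- The vertices of the hypercube `□^ι = {0,1}^ι`. -/
abbrev Cube (ι : Type) : Type := ι → Fin 2

variable (ι : Type) [Fintype ι] [DecidableEq ι]

/-- The ideal `I_rat(□^ι)` of elements rationally equivalent to zero, generated by
(R1) products over lists of points which are not pairwise comparable,
(R2) `C_u · (Σ_v C_v)`, and (R3) `C_u C_w · (Σ_{v : v_i = u_i} C_v)` for `u_i ≠ w_i`. -/
noncomputable def Irat : Ideal (MvPolynomial (Cube ι) ℤ) :=
  Ideal.span
    ({ p | ∃ l : List (Cube ι),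
        ¬ (l.Pairwise fun u v => u ≤ v ∨ v ≤ u) ∧ p = (l.map X).prod } ∪
     { p | ∃ u : Cube ι, p = X u * ∑ v : Cube ι, X v } ∪
     { p | ∃ u w : Cube ι, ∃ i : ι, u i ≠ w i ∧
         p = X u * X w * ∑ v ∈ Finset.univ.filter (fun v : Cube ι => v i = u i), X v })

/-- The Chow ring of the hypercube, `Chow(□^ι) = Z(□^ι)/I_rat`. -/
abbrev Chow : Type := MvPolynomial (Cube ι) ℤ ⧸ Irat ι

noncomputable def mk : MvPolynomial (Cube ι) ℤ →ₐ[ℤ] Chow ι :=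
  Ideal.Quotient.mkₐ ℤ (Irat ι)

/-- The degree `n` graded piece `Chow^n(□^ι)`. -/
noncomputable def piece (n : ℕ) : Submodule ℤ (Chow ι) :=
  Submodule.map (mk ι).toLinearMap (homogeneousSubmodule (Cube ι) ℤ n)

/-- The number of coordinates equal to `1`. -/
def wt (u : Cube ι) : ℕ := (Finset.univ.filter fun i => u i = 1).card

/-- The `j`-th vertex of the standard maximal chain in `{0,1}^ι`: the indicator
function of the set of the `j` smallest indices. -/
def chainVtx [LinearOrder ι] (j : ℕ) : Cube ι :=
  fun i => if (Finset.univ.filter fun i' => i' < i).card < j then 1 else 0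

/-- The monomial `C_{u_0}⋯C_{u_card ι}` of the standard maximal chain;
its class generates the top graded piece, and the degree map `deg` is the isomorphism
`Chow^{card ι + 1}(□^ι) ≅ ℤ` sending this class to `1`. -/
noncomputable def genMono [LinearOrder ι] : MvPolynomial (Cube ι) ℤ :=
  ∏ j ∈ Finset.range (Fintype.card ι + 1), X (chainVtx ι j)

end ChowCube

namespace ChowCube

/-! ### Weights of vertices -/

section Weights

variable {d : ℕ}

theorem fin2_cases (x : Fin 2) : x = 0 ∨ x = 1 := by
  revert x
  decide

theorem coord_of_le {u v : Cube (Fin d)} (h : u ≤ v) (i : Fin d) : u i = 0 ∨ v i = 1 := by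
  have : ∀ x y : Fin 2, x ≤ y → x = 0 ∨ y = 1 := by decide
  exact this _ _ (h i)

theorem le_of_coord {u v : Cube (Fin d)} (h : ∀ i, u i = 0 ∨ v i = 1) : u ≤ v := by
  have : ∀ x y : Fin 2, x = 0 ∨ y = 1 → x ≤ y := by decide
  exact fun i => this _ _ (h i)

theorem wt_le {u v : Cube (Fin d)} (h : u ≤ v) : wt (Fin d) u ≤ wt (Fin d) v := by
  apply Finset.card_le_card
  intro i
  have := coord_of_le h i
  simp only [Finset.mem_filter, Finset.mem_univ, true_and]
  intro hi
  grind

theorem eq_of_wt_le {u v : Cube (Fin d)} (h : u ≤ v) (hw : wt (Fin d) v ≤ wt (Fin d) u) :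
    u = v := by
  have hsub : (Finset.univ.filter fun i => u i = 1) ⊆ Finset.univ.filter fun i => v i = 1 := by
    intro i
    have := coord_of_le h i
    simp only [Finset.mem_filter, Finset.mem_univ, true_and]
    intro hi
    grind
  have := Finset.eq_of_subset_of_card_le hsub hw
  funext i
  have h1 := Finset.ext_iff.1 this i
  simp only [Finset.mem_filter, Finset.mem_univ, true_and] at h1
  have := fin2_cases (u i)
  have := fin2_cases (v i)
  grind

theorem wt_lt {u v : Cube (Fin d)} (h : u < v) : wt (Fin d) u < wt (Fin d) v := by
  by_contra hc
  exact h.ne (eq_of_wt_le h.le (not_lt.1 hc))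

theorem wt_le_dim (u : Cube (Fin d)) : wt (Fin d) u ≤ d := by
  unfold wt
  exact (Finset.card_filter_le _ _).trans (by simp)

theorem bot_le (u : Cube (Fin d)) : (0 : Cube (Fin d)) ≤ u := fun _ => Fin.zero_le _

theorem le_top (u : Cube (Fin d)) : u ≤ (1 : Cube (Fin d)) :=
  le_of_coord fun _ => Or.inr rfl

@[simp] theorem wt_zero : wt (Fin d) 0 = 0 := by simp [wt]

@[simp] theorem wt_one : wt (Fin d) 1 = d := by simp [wt]

theorem exists_coord {u v : Cube (Fin d)} (h : u < v) : ∃ i, u i = 0 ∧ v i = 1 := by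
  by_contra hc
  push Not at hc
  refine h.not_ge (le_of_coord fun i => ?_)
  have := hc i
  have := fin2_cases (u i)
  have := fin2_cases (v i)
  tauto

end Weights

/-! ### Generators of the top piece -/

section Ring

variable {d : ℕ}

/-- The class of the vertex variable `C_v` in the Chow ring. -/
noncomputable def cls (v : Cube (Fin d)) : Chow (Fin d) := mk (Fin d) (X v)

theorem mk_eq_zero {p : MvPolynomial (Cube (Fin d)) ℤ} (h : p ∈ Irat (Fin d)) :
    mk (Fin d) p = 0 := Ideal.Quotient.eq_zero_iff_mem.2 h

theorem cls_mul_eq_zero {u v : Cube (Fin d)} (h : ¬ (u ≤ v ∨ v ≤ u)) : cls u * cls v = 0 := by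
  rw [cls, cls, ← map_mul]
  apply mk_eq_zero
  refine Ideal.subset_span (Or.inl (Or.inl ⟨[u, v], ?_, ?_⟩))
  · simpa using h
  · simp

theorem cls_mul_sum (u : Cube (Fin d)) : cls u * ∑ v, cls v = 0 := by
  have : mk (Fin d) (X u * ∑ v, X v) = 0 :=
    mk_eq_zero (Ideal.subset_span (Or.inl (Or.inr ⟨u, rfl⟩)))
  simpa [cls] using this

theorem cls_mul_filter (u w : Cube (Fin d)) (i : Fin d) (h : u i ≠ w i) :
    cls u * cls w * ∑ v ∈ Finset.univ.filter (fun v : Cube (Fin d) => v i = u i), cls v = 0 := by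
  have : mk (Fin d) (X u * X w *
      ∑ v ∈ Finset.univ.filter (fun v : Cube (Fin d) => v i = u i), X v) = 0 :=
    mk_eq_zero (Ideal.subset_span (Or.inr ⟨u, w, i, h, rfl⟩))
  simpa [cls] using this

/-- A high power of the bottom vertex annihilates the low vertices. -/
theorem cls_bot_pow_mul (a : ℕ) : ∀ v : Cube (Fin d), v ≠ 0 → wt (Fin d) v < a →
    cls 0 ^ a * cls v = 0 := by
  induction a with
  | zero => intro v _ h; omega
  | succ a ih =>
    intro v hv hw
    have hlt : (0 : Cube (Fin d)) < v := lt_of_le_of_ne (bot_le v) (Ne.symm hv)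
    have hpos : 0 < wt (Fin d) v := by simpa using wt_lt hlt
    obtain ⟨i, -, hi⟩ := exists_coord hlt
    have hrel := cls_mul_filter (0 : Cube (Fin d)) v i (by simp [hi])
    rw [← Finset.add_sum_erase _ _ (a := (0 : Cube (Fin d))) (by simp), mul_add] at hrel
    have hz : cls 0 ^ (a - 1) * (cls 0 * cls v * ∑ x ∈ (Finset.univ.filter
        (fun x : Cube (Fin d) => x i = (0 : Cube (Fin d)) i)).erase 0, cls x) = 0 := by
      rw [Finset.mul_sum, Finset.mul_sum]
      apply Finset.sum_eq_zero
      intro x hx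
      simp only [Finset.mem_erase, Finset.mem_filter, Finset.mem_univ, true_and,
        Pi.zero_apply] at hx
      by_cases hc : x ≤ v ∨ v ≤ x
      · have hxv : x < v := by
          rcases hc with hc | hc
          · refine lt_of_le_of_ne hc ?_
            rintro rfl
            simp_all
          · have := coord_of_le hc i
            simp_all
        have := ih x hx.1 (by have := wt_lt hxv; omega)
        obtain ⟨b, rfl⟩ : ∃ b, a = b + 1 := ⟨a - 1, by omega⟩
        calc _ = (cls 0 ^ (b + 1) * cls x) * cls v := by simp; ring
          _ = 0 := by rw [this, zero_mul]
      · calc _ = cls 0 ^ (a - 1) * cls 0 * (cls x * cls v) := by ring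
          _ = 0 := by rw [cls_mul_eq_zero hc, mul_zero]
    obtain ⟨b, rfl⟩ : ∃ b, a = b + 1 := ⟨a - 1, by omega⟩
    have h2 := congrArg (cls 0 ^ b * ·) hrel
    simp only [Nat.add_sub_cancel] at hz
    simp only [mul_add, hz, add_zero, mul_zero] at h2
    rw [← h2]
    ring

/-- Trading the lowest remaining vertex of a maximal chain for one more power of `C_0`. -/
theorem chain_step {U : ℕ → Cube (Fin d)} {k : ℕ} (hk : 1 ≤ k) (hlt : U k < U (k + 1))
    (hw : wt (Fin d) (U k) = k) (hw' : wt (Fin d) (U (k + 1)) = k + 1) :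
    cls 0 ^ (k + 1) * cls (U (k + 1)) = - (cls 0 ^ k * cls (U k) * cls (U (k + 1))) := by
  obtain ⟨i, hi0, hi⟩ := exists_coord hlt
  have hne : U k ≠ 0 := by
    intro h
    rw [h, wt_zero] at hw
    omega
  have hrel := cls_mul_filter (0 : Cube (Fin d)) (U (k + 1)) i (by simp [hi])
  rw [← Finset.add_sum_erase _ _ (a := (0 : Cube (Fin d))) (by simp),
    ← Finset.add_sum_erase _ _ (a := U k) (by simp [hi0, hne])] at hrel
  obtain ⟨b, rfl⟩ : ∃ b, k = b + 1 := ⟨k - 1, by omega⟩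
  have hz : cls 0 ^ b * (cls 0 * cls (U (b + 1 + 1)) * ∑ x ∈ ((Finset.univ.filter
      (fun x : Cube (Fin d) => x i = (0 : Cube (Fin d)) i)).erase 0).erase (U (b + 1)),
        cls x) = 0 := by
    rw [Finset.mul_sum, Finset.mul_sum]
    apply Finset.sum_eq_zero
    intro x hx
    simp only [Finset.mem_erase, Finset.mem_filter, Finset.mem_univ, true_and,
      Pi.zero_apply] at hx
    obtain ⟨hxU, hx0, hxi⟩ := hx
    by_cases hc : x ≤ U (b + 1 + 1) ∨ U (b + 1 + 1) ≤ x
    · have hxle : x ≤ U (b + 1) := by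
        -- `U (k+1)` differs from `U k` only in the coordinate `i`, where `x` vanishes
        rcases hc with hc | hc
        · have hsub : (Finset.univ.filter fun j => U (b + 1) j = 1) ⊆
              (Finset.univ.filter fun j => U (b + 1 + 1) j = 1).erase i := by
            intro j
            have := coord_of_le hlt.le j
            simp only [Finset.mem_erase, Finset.mem_filter, Finset.mem_univ, true_and]
            intro hj
            refine ⟨?_, by simp_all⟩
            rintro rfl
            simp_all
          have heq := Finset.eq_of_subset_of_card_le hsub (by
            rw [Finset.card_erase_of_mem (by simp [hi])]
            change wt (Fin d) (U (b + 1 + 1)) - 1 ≤ wt (Fin d) (U (b + 1))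
            simp only [hw, hw']
            omega)
          refine le_of_coord fun j => ?_
          have h1 := Finset.ext_iff.1 heq j
          simp only [Finset.mem_erase, Finset.mem_filter, Finset.mem_univ, true_and] at h1
          have := coord_of_le hc j
          by_cases hji : j = i
          · subst hji
            exact Or.inl hxi
          · simp only [hji, not_false_eq_true, ne_eq, true_and] at h1
            tauto
        · have := coord_of_le hc i
          simp_all
      have := cls_bot_pow_mul (b + 1) x hx0
        (by have := wt_lt (lt_of_le_of_ne hxle hxU); rwa [hw] at this)
      calc _ = (cls 0 ^ (b + 1) * cls x) * cls (U (b + 1 + 1)) := by ring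
        _ = 0 := by rw [this, zero_mul]
    · calc _ = cls 0 ^ b * cls 0 * (cls x * cls (U (b + 1 + 1))) := by ring
        _ = 0 := by rw [cls_mul_eq_zero hc, mul_zero]
  have h2 := congrArg (cls 0 ^ b * ·) hrel
  simp only [mul_add, hz, add_zero, mul_zero] at h2
  rw [eq_neg_iff_add_eq_zero, ← h2]
  ring

theorem wt_strictMono {u : Fin (d + 1) → Cube (Fin d)} (hu : StrictMono u) (j : Fin (d + 1)) :
    wt (Fin d) (u j) = j := by
  have hm : StrictMono fun j => wt (Fin d) (u j) := fun a b h => wt_lt (hu h)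
  have h1 : ∀ n (hn : n < d + 1), n ≤ wt (Fin d) (u ⟨n, hn⟩) := by
    intro n
    induction n with
    | zero => intro _; exact Nat.zero_le _
    | succ n ih =>
      intro hn
      have := ih (by omega)
      have := hm (show (⟨n, by omega⟩ : Fin (d + 1)) < ⟨n + 1, hn⟩ by simp)
      simp only at this
      omega
  have h2 : ∀ k (hk : k ≤ d), wt (Fin d) (u ⟨d - k, by omega⟩) ≤ d - k := by
    intro k
    induction k with
    | zero => intro _; exact wt_le_dim _
    | succ k ih =>
      intro hk
      have := ih (by omega)
      have := hm (show (⟨d - (k + 1), by omega⟩ : Fin (d + 1)) < ⟨d - k, by omega⟩ by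
        simp only [Fin.mk_lt_mk]; omega)
      simp only at this
      omega
  obtain ⟨j, hj⟩ := j
  have := h1 j hj
  have := h2 (d - j) (by omega)
  simp only [show d - (d - j) = j by omega] at this
  simp only
  omega

/-- Every maximal chain has the class `± C_0^d C_1`, which does not depend on the chain. -/
theorem chain_class (hd : 1 ≤ d) {u : Fin (d + 1) → Cube (Fin d)} (hu : StrictMono u) :
    ∏ j, cls (u j) = (-1) ^ (d - 1) * (cls 0 ^ d * cls 1) := by
  have hwt := wt_strictMono hu
  let U : ℕ → Cube (Fin d) := fun n => u ⟨min n d, by omega⟩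
  have hUw : ∀ n, n ≤ d → wt (Fin d) (U n) = n := by
    intro n hn
    simp only [U, hwt]
    omega
  have hU0 : U 0 = 0 := (eq_of_wt_le (bot_le _) (by rw [hUw 0 (by omega)]; simp)).symm
  have hUd : U d = 1 := eq_of_wt_le (le_top _) (by rw [hUw d le_rfl]; simp)
  have hUlt : ∀ n, n < d → U n < U (n + 1) := by
    intro n hn
    apply hu
    simp only [Fin.mk_lt_mk]
    omega
  have key : ∀ k, 1 ≤ k → k ≤ d → ∏ n ∈ Finset.range (d + 1), cls (U n) =
      (-1) ^ (k - 1) * (cls 0 ^ k * ∏ n ∈ Finset.Ico k (d + 1), cls (U n)) := by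
    intro k hk
    induction k, hk using Nat.le_induction with
    | base =>
      intro _
      rw [Finset.range_eq_Ico, Finset.prod_eq_prod_Ico_succ_bot (by omega), hU0]
      simp
    | succ k hk ih =>
      intro hkd
      rw [ih (by omega), Finset.prod_eq_prod_Ico_succ_bot (by omega : k < d + 1),
        Finset.prod_eq_prod_Ico_succ_bot (by omega : k + 1 < d + 1)]
      have := chain_step hk (hUlt k (by omega)) (hUw k (by omega)) (hUw (k + 1) hkd)
      obtain ⟨b, rfl⟩ : ∃ b, k = b + 1 := ⟨k - 1, by omega⟩
      rw [← mul_assoc (cls 0 ^ (b + 1 + 1)), this]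
      simp only [Nat.add_sub_cancel]
      ring
  have h := key d hd le_rfl
  rw [Nat.Ico_succ_singleton, Finset.prod_singleton, hUd] at h
  rw [← h, Finset.prod_range]
  refine Finset.prod_congr rfl fun j _ => ?_
  congr 2
  simp only [Fin.ext_iff]
  omega

/-- The span of the squarefree monomials of degree `n`. -/
noncomputable def sqfree (d n : ℕ) : Submodule ℤ (Chow (Fin d)) :=
  Submodule.span ℤ {x | ∃ σ : Finset (Cube (Fin d)), σ.card = n ∧ x = ∏ v ∈ σ, cls v}

theorem prod_mem_sqfree (σ : Finset (Cube (Fin d))) : ∏ v ∈ σ, cls v ∈ sqfree d σ.card :=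
  Submodule.subset_span ⟨σ, rfl, rfl⟩

theorem prod_eq_zero_of_not_chain {σ : Finset (Cube (Fin d))} {u v : Cube (Fin d)}
    (hu : u ∈ σ) (hv : v ∈ σ) (h : ¬ (u ≤ v ∨ v ≤ u)) : ∏ x ∈ σ, cls x = 0 := by
  have hne : v ≠ u := by rintro rfl; exact h (Or.inl le_rfl)
  rw [← Finset.mul_prod_erase _ _ hu, ← Finset.mul_prod_erase _ _ (Finset.mem_erase.2 ⟨hne, hv⟩),
    ← mul_assoc, cls_mul_eq_zero h, zero_mul]

open Classical in
/-- Repeated factors `C_x` on a chain are traded for new vertices: the relation (R3) for the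
predecessor of `x` moves the multiplicity upwards, and (R2) handles the bottom of the chain. -/
theorem cls_mul_prod_mem {σ : Finset (Cube (Fin d))}
    (hσ : ∀ u ∈ σ, ∀ v ∈ σ, u ≤ v ∨ v ≤ u) {x : Cube (Fin d)} (hx : x ∈ σ) :
    cls x * ∏ v ∈ σ, cls v ∈ sqfree d (σ.card + 1) := by
  have hnew : ∀ v, v ∉ σ → cls v * ∏ y ∈ σ, cls y ∈ sqfree d (σ.card + 1) := by
    intro v hv
    rw [← Finset.prod_insert hv, ← Finset.card_insert_of_notMem hv]
    exact prod_mem_sqfree _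
  -- a vertex of `σ` which is not the lowest one: downward induction on its weight, using (R3)
  have hup : ∀ n, ∀ x ∈ σ, d - wt (Fin d) x = n → (∃ y ∈ σ, y < x) →
      cls x * ∏ v ∈ σ, cls v ∈ sqfree d (σ.card + 1) := by
    intro n
    induction n using Nat.strong_induction_on with
    | _ n ih =>
      intro x hx hn hy
      obtain ⟨y₀, hy₀, hyx₀⟩ := hy
      obtain ⟨y, hymax⟩ := (σ.filter (· < x)).exists_maximal
        ⟨y₀, Finset.mem_filter.2 ⟨hy₀, hyx₀⟩⟩
      obtain ⟨hyσ, hyx⟩ := Finset.mem_filter.1 hymax.1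
      obtain ⟨i, hi0, hi1⟩ := exists_coord hyx
      have hrel := cls_mul_filter x y i (by simp [hi0, hi1])
      rw [← Finset.add_sum_erase _ _ (a := x) (by simp), mul_add] at hrel
      have h2 := congrArg (· * ∏ z ∈ (σ.erase x).erase y, cls z) hrel
      have hprod : ∏ v ∈ σ, cls v = cls x * cls y * ∏ z ∈ (σ.erase x).erase y, cls z := by
        rw [mul_assoc, Finset.mul_prod_erase _ _ (Finset.mem_erase.2 ⟨hyx.ne, hyσ⟩),
          Finset.mul_prod_erase _ _ hx]
      have h3 : cls x * ∏ v ∈ σ, cls v = - ∑ v ∈ (Finset.univ.filter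
          (fun v : Cube (Fin d) => v i = x i)).erase x, cls v * ∏ v ∈ σ, cls v := by
        rw [eq_neg_iff_add_eq_zero, ← Finset.sum_mul, hprod]
        simp only [zero_mul] at h2
        rw [← h2]
        ring
      rw [h3]
      refine Submodule.neg_mem _ (Submodule.sum_mem _ fun v hv => ?_)
      simp only [Finset.mem_erase, Finset.mem_filter, Finset.mem_univ, true_and] at hv
      by_cases hvσ : v ∈ σ
      · have hxv : x < v := by
          rcases hσ x hx v hvσ with h | h
          · exact lt_of_le_of_ne h (Ne.symm hv.1)
          · exfalso
            have hvx := lt_of_le_of_ne h hv.1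
            have hvy : v ≤ y := by
              rcases hσ v hvσ y hyσ with h' | h'
              · exact h'
              · exact hymax.2 (Finset.mem_filter.2 ⟨hvσ, hvx⟩) h'
            have := coord_of_le hvy i
            simp_all
        have := wt_lt hxv
        have := wt_le_dim v
        exact ih (d - wt (Fin d) v) (by omega) v hvσ rfl ⟨x, hx, hxv⟩
      · exact hnew v hvσ
  by_cases hy : ∃ y ∈ σ, y < x
  · exact hup _ x hx rfl hy
  · push Not at hy
    have hrel := cls_mul_sum x
    rw [← Finset.add_sum_erase _ _ (Finset.mem_univ x), mul_add] at hrel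
    have h2 := congrArg (· * ∏ z ∈ σ.erase x, cls z) hrel
    have h3 : cls x * ∏ v ∈ σ, cls v =
        - ∑ v ∈ Finset.univ.erase x, cls v * ∏ v ∈ σ, cls v := by
      rw [eq_neg_iff_add_eq_zero, ← Finset.sum_mul, ← Finset.mul_prod_erase _ _ hx]
      simp only [zero_mul] at h2
      rw [← h2]
      ring
    rw [h3]
    refine Submodule.neg_mem _ (Submodule.sum_mem _ fun v hv => ?_)
    -- every other vertex of `σ` lies above the lowest vertex `x`
    have hvx := (Finset.mem_erase.1 hv).1
    by_cases hvσ : v ∈ σ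
    · refine hup _ v hvσ rfl ⟨x, hx, ?_⟩
      rcases hσ x hx v hvσ with h | h
      · exact lt_of_le_of_ne h (Ne.symm hvx)
      · exact absurd (lt_of_le_of_ne h hvx) (hy v hvσ)
    · exact hnew v hvσ

theorem cls_mul_mem {n : ℕ} (hn : 1 ≤ n) (v : Cube (Fin d)) {x : Chow (Fin d)}
    (hx : x ∈ sqfree d n) : cls v * x ∈ sqfree d (n + 1) := by
  induction hx using Submodule.span_induction with
  | zero => simp
  | add x y _ _ hx hy => rw [mul_add]; exact Submodule.add_mem _ hx hy
  | smul r x _ hx => rw [mul_smul_comm]; exact Submodule.smul_mem _ _ hx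
  | mem x hx =>
    obtain ⟨σ, rfl, rfl⟩ := hx
    by_cases hσ : ∀ u ∈ σ, ∀ v ∈ σ, u ≤ v ∨ v ≤ u
    · by_cases hv : v ∈ σ
      · exact cls_mul_prod_mem hσ hv
      · rw [← Finset.prod_insert hv, ← Finset.card_insert_of_notMem hv]
        exact prod_mem_sqfree _
    · push Not at hσ
      obtain ⟨u, hu, w, hw, h1, h2⟩ := hσ
      rw [prod_eq_zero_of_not_chain hu hw (by tauto), mul_zero]
      exact Submodule.zero_mem _

theorem exists_single_add {m : Cube (Fin d) →₀ ℕ} {n : ℕ} (hm : m.degree = n + 1) :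
    ∃ v m', m'.degree = n ∧ m = Finsupp.single v 1 + m' := by
  obtain ⟨v, hv⟩ : ∃ v, m v ≠ 0 := by
    by_contra h
    push Not at h
    have : m = 0 := Finsupp.ext h
    simp [this] at hm
  have hle : Finsupp.single v 1 ≤ m := by
    rw [Finsupp.single_le_iff]; omega
  have hm' : m = Finsupp.single v 1 + (m - Finsupp.single v 1) := by
    rw [add_tsub_cancel_of_le hle]
  refine ⟨v, _, ?_, hm'⟩
  have := congrArg Finsupp.degree hm'
  rw [map_add, Finsupp.degree_single] at this
  omega

theorem monomial_mem (n : ℕ) : ∀ m : Cube (Fin d) →₀ ℕ, m.degree = n + 1 →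
    mk (Fin d) (monomial m 1) ∈ sqfree d (n + 1) := by
  induction n with
  | zero =>
    intro m hm
    obtain ⟨v, m', hm', rfl⟩ := exists_single_add hm
    rw [Finsupp.degree_eq_zero_iff] at hm'
    subst hm'
    simpa [cls, X] using prod_mem_sqfree ({v} : Finset (Cube (Fin d)))
  | succ n ih =>
    intro m hm
    obtain ⟨v, m', hm', rfl⟩ := exists_single_add hm
    have : monomial (Finsupp.single v 1 + m') (1 : ℤ) = X v * monomial m' 1 := by
      rw [X, monomial_mul, one_mul]
    rw [this, map_mul]
    have hrec := ih _ hm'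
    exact cls_mul_mem (by omega) v hrec

/-- A chain of `d + 1` vertices, listed by weight, is a maximal chain. -/
theorem prod_eq_chain (hd : 1 ≤ d) {σ : Finset (Cube (Fin d))} (hc : σ.card = d + 1)
    (hσ : ∀ u ∈ σ, ∀ v ∈ σ, u ≤ v ∨ v ≤ u) :
    ∏ v ∈ σ, cls v = (-1) ^ (d - 1) * (cls 0 ^ d * cls 1) := by
  let f : σ → Fin (d + 1) := fun v => ⟨wt (Fin d) v.1, by have := wt_le_dim v.1; omega⟩
  have hf : Function.Injective f := by
    intro a b h
    have hw : wt (Fin d) a.1 = wt (Fin d) b.1 := by simpa [f] using h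
    apply Subtype.ext
    rcases hσ a a.2 b b.2 with h' | h'
    · exact eq_of_wt_le h' hw.ge
    · exact (eq_of_wt_le h' hw.le).symm
  have hb : Function.Bijective f := (Fintype.bijective_iff_injective_and_card f).2
    ⟨hf, by simp [hc]⟩
  let e := Equiv.ofBijective f hb
  have hwe : ∀ j, wt (Fin d) (e.symm j).1 = j := fun j => by
    have : f (e.symm j) = j := e.apply_symm_apply j
    simpa [f] using congrArg Fin.val this
  have hmono : StrictMono fun j => (e.symm j).1 := by
    intro a b hab
    have ha := hwe a
    have hb := hwe b
    have : (a : ℕ) < b := hab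
    rcases hσ _ (e.symm a).2 _ (e.symm b).2 with h' | h'
    · refine lt_of_le_of_ne h' fun heq => ?_
      simp only at heq
      rw [heq] at ha
      omega
    · have := wt_le h'
      omega
  rw [← chain_class hd hmono, ← Finset.prod_coe_sort]
  exact Fintype.prod_equiv e _ _ fun v => by simp

/-- Only maximal chains survive among the squarefree monomials of degree `d + 1`, and they all
have the same class. -/
theorem piece_le (hd : 1 ≤ d) : piece (Fin d) (d + 1) ≤
    Submodule.span ℤ {((-1) ^ (d - 1) * (cls 0 ^ d * cls 1) : Chow (Fin d))} := by
  have h1 : sqfree d (d + 1) ≤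
      Submodule.span ℤ {((-1) ^ (d - 1) * (cls 0 ^ d * cls 1) : Chow (Fin d))} := by
    refine Submodule.span_le.2 ?_
    rintro _ ⟨σ, hc, rfl⟩
    by_cases hσ : ∀ u ∈ σ, ∀ v ∈ σ, u ≤ v ∨ v ≤ u
    · rw [prod_eq_chain hd hc hσ]
      exact Submodule.mem_span_singleton_self _
    · push Not at hσ
      obtain ⟨u, hu, w, hw, h1, h2⟩ := hσ
      rw [prod_eq_zero_of_not_chain hu hw (by tauto)]
      exact Submodule.zero_mem _
  refine le_trans ?_ h1
  rintro _ ⟨p, hp, rfl⟩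
  have hp' : p.IsHomogeneous (d + 1) := hp
  change mk (Fin d) p ∈ _
  rw [p.as_sum, map_sum]
  refine Submodule.sum_mem _ fun m hm => ?_
  have hdeg : m.degree = d + 1 := by
    have := hp' (mem_support_iff.1 hm)
    rw [Finsupp.degree_eq_weight_one]
    exact this
  have : monomial m (coeff m p) = coeff m p • monomial m (1 : ℤ) := by
    rw [smul_monomial, smul_eq_mul, mul_one]
  rw [this, map_smul]
  exact Submodule.smul_mem _ _ (monomial_mem d m hdeg)

end Ring

end ChowCube

namespace ChowCube

/-! ### The degree of a chain with multiplicities -/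

section Transfer

/-- `transfer d a p g R` reads the multiplicities `a p, …, a d` of the weights `p, …, d` on a
chain. The state `(g, R)` records that the last `g` weights were skipped since the last vertex
of the chain, and that this vertex has `R` of its surplus factors to be absorbed by the gap above
it. A gap of `g` weights absorbs `R` factors from below and `g - R` from above, and contributes
`choose g R`; a vertex of multiplicity `k + 1` contributes `(-1) ^ k * choose k (g - R)`.
At the top of the chain all of the last gap has to be absorbed from below, that is, `g = R`.
The subtractions truncate only where one of the two binomial coefficients vanishes. -/
def transfer (d : ℕ) (a : ℕ → ℕ) (p g R : ℕ) : ℤ :=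
  if d < p then (if g = R then 1 else 0)
  else if a p = 0 then transfer d a (p + 1) (g + 1) R
  else g.choose R * (-1) ^ (a p - 1) * (a p - 1).choose (g - R) *
    transfer d a (p + 1) 0 (a p - 1 - (g - R))
termination_by d + 1 - p

variable {d : ℕ} {a b : ℕ → ℕ}

theorem transfer_end {p g R : ℕ} (h : d < p) :
    transfer d a p g R = if g = R then 1 else 0 := by
  rw [transfer, if_pos h]

theorem transfer_skip {p g R : ℕ} (h : p ≤ d) (ha : a p = 0) :
    transfer d a p g R = transfer d a (p + 1) (g + 1) R := by
  rw [transfer, if_neg (by omega), if_pos ha]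

theorem transfer_vertex {p g R k : ℕ} (h : p ≤ d) (ha : a p = k + 1) :
    transfer d a p g R = g.choose R * (-1) ^ k * k.choose (g - R) *
      transfer d a (p + 1) 0 (k - (g - R)) := by
  rw [transfer, if_neg (by omega), if_neg (by omega), ha, Nat.add_sub_cancel]

theorem transfer_run {p q : ℕ} (hpq : p ≤ q) (hq : q ≤ d + 1)
    (h : ∀ t, p ≤ t → t < q → a t = 0) (g R : ℕ) :
    transfer d a p g R = transfer d a q (g + (q - p)) R := by
  induction q, hpq using Nat.le_induction with
  | base => simp
  | succ q hpq ih =>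
    rw [ih (by omega) (fun t h1 h2 => h t h1 (by omega)),
      transfer_skip (by omega) (h q hpq (by omega))]
    congr 1
    omega

theorem transfer_congr (n : ℕ) : ∀ {p : ℕ}, d + 1 - p = n →
    (∀ t, p ≤ t → t ≤ d → a t = b t) → ∀ g R, transfer d a p g R = transfer d b p g R := by
  induction n with
  | zero =>
    intro p hp _ g R
    rw [transfer_end (by omega), transfer_end (by omega)]
  | succ n ih =>
    intro p hp h g R
    have := fun g R => ih (p := p + 1) (by omega) (fun t h1 h2 => h t (by omega) h2) g R
    rw [transfer.eq_def d a p, transfer.eq_def d b p, h p le_rfl (by omega), this, this]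

/-- The value factors at every vertex of the chain, and the first factor does not depend on the
multiplicities above this vertex. -/
theorem transfer_prefix {q : ℕ} (hq : q ≤ d) (haq : a q ≠ 0) (n : ℕ) : ∀ {p : ℕ}, q - p = n →
    p ≤ q → ∀ g R, ∃ (c : ℤ) (R' : ℕ), ∀ b : ℕ → ℕ, (∀ t, p ≤ t → t ≤ q → b t = a t) →
      transfer d b p g R = c * transfer d b (q + 1) 0 R' := by
  induction n with
  | zero =>
    intro p hp hpq g R
    obtain rfl : p = q := by omega
    obtain ⟨k, hk⟩ : ∃ k, a p = k + 1 := ⟨a p - 1, by omega⟩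
    exact ⟨_, _, fun b hb => transfer_vertex hq ((hb p le_rfl le_rfl).trans hk)⟩
  | succ n ih =>
    intro p hp hpq g R
    rcases Nat.eq_zero_or_pos (a p) with h0 | h0
    · obtain ⟨c, R', h⟩ := ih (p := p + 1) (by omega) (by omega) (g + 1) R
      refine ⟨c, R', fun b hb => ?_⟩
      rw [transfer_skip (by omega) ((hb p le_rfl hpq).trans h0)]
      exact h b fun t h1 h2 => hb t (by omega) h2
    · obtain ⟨k, hk⟩ : ∃ k, a p = k + 1 := ⟨a p - 1, by omega⟩
      obtain ⟨c, R', h⟩ := ih (p := p + 1) (by omega) (by omega) 0 (k - (g - R))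
      refine ⟨g.choose R * (-1) ^ k * k.choose (g - R) * c, R', fun b hb => ?_⟩
      rw [transfer_vertex (by omega) ((hb p le_rfl hpq).trans hk), mul_assoc _ c]
      rw [h b fun t h1 h2 => hb t (by omega) h2]

/-- The multiplicities after adding one vertex of weight `p`. -/
def bump (a : ℕ → ℕ) (p : ℕ) : ℕ → ℕ := fun t => a t + if t = p then 1 else 0

theorem bump_self (p : ℕ) : bump a p p = a p + 1 := by simp [bump]

theorem bump_of_ne {p t : ℕ} (h : t ≠ p) : bump a p t = a t := by simp [bump, h]

/-- A new vertex of multiplicity one absorbs nothing, so it must sit at weight `q₀ + R`. -/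
theorem transfer_bump_gap {q₀ q p k R : ℕ} (h1 : q₀ ≤ p) (h2 : p < q) (hq : q ≤ d)
    (h0 : ∀ t, q₀ ≤ t → t < q → a t = 0) (hk : a q = k + 1) :
    transfer d (bump a p) q₀ 0 R = if p = q₀ + R then
      (-1) ^ k * k.choose (q - q₀ - R - 1) * transfer d a (q + 1) 0 (k - (q - q₀ - R - 1))
      else 0 := by
  rw [transfer_run h1 (by omega) (fun t h3 h4 => by
    rw [bump_of_ne (by omega), h0 t h3 (by omega)]), zero_add,
    transfer_vertex (k := 0) (by omega) (by rw [bump_self, h0 p h1 h2])]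
  split_ifs with h
  · rw [transfer_congr (b := a) _ rfl (fun t h3 h4 => bump_of_ne (by omega)),
      transfer_run (q := q) (by omega) (by omega) (fun t h3 h4 => h0 t (by omega) h4),
      transfer_vertex hq hk]
    have e1 : p - q₀ = R := by omega
    have e2 : q - (p + 1) = q - q₀ - R - 1 := by omega
    simp [e1, e2]
  · rcases lt_or_gt_of_ne h with h' | h'
    · rw [Nat.choose_eq_zero_of_lt (show p - q₀ < R by omega)]
      simp
    · rw [Nat.choose_eq_zero_of_lt (show 0 < p - q₀ - R by omega)]
      simp

/-- The local form of the relations. The chain is continued from the weight `q₀` on, its next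
vertex `u'` has weight `q`. The new vertices `S` of the gap, the vertex `u'` itself and the
vertices `U` above `u'` have contributions which cancel by Pascal's rule, except for the excess
of the number of vertices of `S` of the critical weight `q₀ + R` over `choose (q - q₀) R`. -/
theorem gap_sum {ι : Type} (w : ι → ℕ) (S U : Finset ι) {q₀ q k R N : ℕ} (h1 : q₀ ≤ q)
    (hq : q ≤ d) (h0 : ∀ t, q₀ ≤ t → t < q → a t = 0) (hk : a q = k + 1)
    (hS : ∀ v ∈ S, q₀ ≤ w v ∧ w v < q)
    (hN : R < q - q₀ → (S.filter fun v => w v = q₀ + R).card = N)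
    (hU : ∀ v ∈ U, q < w v)
    (hUs : ∀ R, ∑ v ∈ U, transfer d (bump a (w v)) (q + 1) 0 R = transfer d a (q + 1) 0 (R + 1)) :
    ∑ v ∈ S, transfer d (bump a (w v)) q₀ 0 R + transfer d (bump a q) q₀ 0 R +
      ∑ v ∈ U, transfer d (bump a (w v)) q₀ 0 R =
    if R < q - q₀ then ((N : ℤ) - (q - q₀).choose R) * ((-1) ^ k * k.choose (q - q₀ - R - 1) *
      transfer d a (q + 1) 0 (k - (q - q₀ - R - 1))) else 0 := by
  have eS : ∑ v ∈ S, transfer d (bump a (w v)) q₀ 0 R = if R < q - q₀ then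
      (N : ℤ) * ((-1) ^ k * k.choose (q - q₀ - R - 1) *
        transfer d a (q + 1) 0 (k - (q - q₀ - R - 1))) else 0 := by
    rw [Finset.sum_congr rfl fun v hv =>
      transfer_bump_gap (R := R) (hS v hv).1 (hS v hv).2 hq h0 hk, ← Finset.sum_filter,
      Finset.sum_const]
    split_ifs with h
    · rw [hN h, nsmul_eq_mul]
    · rw [Finset.filter_false_of_mem (fun v hv => by have := hS v hv; omega)]
      simp
  have eq : transfer d (bump a q) q₀ 0 R = (q - q₀).choose R * (-1) ^ (k + 1) *
      (k + 1).choose (q - q₀ - R) * transfer d a (q + 1) 0 (k + 1 - (q - q₀ - R)) := by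
    rw [transfer_run h1 (by omega) (fun t h3 h4 => by
      rw [bump_of_ne (by omega), h0 t h3 (by omega)]), zero_add,
      transfer_vertex (k := k + 1) hq (by rw [bump_self, hk]),
      transfer_congr (b := a) _ rfl (fun t h3 h4 => bump_of_ne (by omega))]
  have eU : ∑ v ∈ U, transfer d (bump a (w v)) q₀ 0 R = (q - q₀).choose R * (-1) ^ k *
      k.choose (q - q₀ - R) * transfer d a (q + 1) 0 (k - (q - q₀ - R) + 1) := by
    rw [← hUs, Finset.mul_sum]
    refine Finset.sum_congr rfl fun v hv => ?_
    have := hU v hv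
    rw [transfer_run h1 (by omega) (fun t h3 h4 => by
      rw [bump_of_ne (by omega), h0 t h3 (by omega)]), zero_add,
      transfer_vertex (k := k) hq (by rw [bump_of_ne (by omega), hk])]
  rw [eS, eq, eU]
  split_ifs with h
  · obtain ⟨j, hj⟩ : ∃ j, q - q₀ - R = j + 1 := ⟨q - q₀ - R - 1, by omega⟩
    rw [hj, Nat.add_sub_cancel, Nat.add_sub_add_right, Nat.choose_succ_succ]
    rcases Nat.lt_or_ge j k with h' | h'
    · rw [show k - (j + 1) + 1 = k - j by omega]
      push_cast
      ring
    · rw [Nat.choose_eq_zero_of_lt (show k < j + 1 by omega)]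
      push_cast
      ring
  · rw [show q - q₀ - R = 0 by omega]
    simp
    ring

end Transfer

/-! ### Vertices of given weight in an interval -/

section Count

variable {d : ℕ}

open Classical in
/-- The interval `[u, w]` is a cube of dimension `wt w - wt u`. -/
theorem card_interval {u w : Cube (Fin d)} (h : u ≤ w) (n : ℕ) :
    (Finset.univ.filter fun v : Cube (Fin d) =>
      (u ≤ v ∧ v ≤ w) ∧ wt (Fin d) v = wt (Fin d) u + n).card =
    (wt (Fin d) w - wt (Fin d) u).choose n := by
  have hsplit : ∀ v : Cube (Fin d), u ≤ v → wt (Fin d) v =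
      wt (Fin d) u + (Finset.univ.filter fun i => v i = 1 ∧ u i = 0).card := by
    intro v hv
    unfold wt
    rw [← Finset.card_union_of_disjoint]
    · congr 1
      ext i
      have := coord_of_le hv i
      have := fin2_cases (u i)
      simp only [Finset.mem_filter, Finset.mem_univ, true_and, Finset.mem_union]
      grind
    · rw [Finset.disjoint_filter]
      intro i _ h1 h2
      rw [h1] at h2
      simp at h2
  have hw : wt (Fin d) w - wt (Fin d) u =
      (Finset.univ.filter fun i => w i = 1 ∧ u i = 0).card := by
    rw [hsplit w h]; omega
  rw [hw, ← Finset.card_powersetCard]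
  refine Finset.card_nbij' (fun v => Finset.univ.filter fun i => v i = 1 ∧ u i = 0)
    (fun s i => if u i = 1 ∨ i ∈ s then 1 else 0) ?_ ?_ ?_ ?_
  · intro v hv
    simp only [Finset.coe_filter, Finset.mem_univ, true_and, Set.mem_ofPred_eq] at hv
    simp only [Finset.mem_coe, Finset.mem_powersetCard]
    refine ⟨?_, ?_⟩
    · intro i
      have := coord_of_le hv.1.2 i
      simp only [Finset.mem_filter, Finset.mem_univ, true_and]
      grind
    · have := hsplit v hv.1.1
      omega
  · intro s hs
    simp only [Finset.mem_coe, Finset.mem_powersetCard] at hs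
    have hs1 : ∀ i ∈ s, w i = 1 ∧ u i = 0 := fun i hi => by simpa using hs.1 hi
    have hu : u ≤ fun i => if u i = 1 ∨ i ∈ s then 1 else 0 := by
      refine le_of_coord fun i => ?_
      have := fin2_cases (u i)
      grind
    simp only [Finset.coe_filter, Finset.mem_univ, true_and, Set.mem_ofPred_eq]
    refine ⟨⟨hu, le_of_coord fun i => ?_⟩, ?_⟩
    · have := hs1 i
      have := coord_of_le h i
      grind
    · rw [hsplit _ hu, ← hs.2]
      congr 2
      ext i
      have := hs1 i
      simp only [Finset.mem_filter, Finset.mem_univ, true_and]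
      grind
  · intro v hv
    simp only [Finset.coe_filter, Finset.mem_univ, true_and, Set.mem_ofPred_eq] at hv
    funext i
    have := coord_of_le hv.1.1 i
    have := fin2_cases (u i)
    have := fin2_cases (v i)
    simp only [Finset.mem_filter, Finset.mem_univ, true_and]
    grind
  · intro s hs
    simp only [Finset.mem_coe, Finset.mem_powersetCard] at hs
    have hs1 : ∀ i ∈ s, w i = 1 ∧ u i = 0 := fun i hi => by simpa using hs.1 hi
    ext i
    have := hs1 i
    simp only [Finset.mem_filter, Finset.mem_univ, true_and]
    grind

end Count

end ChowCube

namespace ChowCube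

/-! ### The degree map -/

section Degree

variable {d : ℕ}

/-- The multiplicity of each weight in a monomial. -/
noncomputable def mults (m : Cube (Fin d) →₀ ℕ) (p : ℕ) : ℕ :=
  ∑ v, if wt (Fin d) v = p then m v else 0

/-- The vertices occurring in the monomial `m` are pairwise comparable. -/
def IsChainMon (m : Cube (Fin d) →₀ ℕ) : Prop :=
  ∀ u v, m u ≠ 0 → m v ≠ 0 → u ≤ v ∨ v ≤ u

/-- The vertex `v` is comparable with every vertex occurring in `m`. -/
def Compat (m : Cube (Fin d) →₀ ℕ) (v : Cube (Fin d)) : Prop :=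
  ∀ x, m x ≠ 0 → x ≤ v ∨ v ≤ x

open Classical in
/-- The degree of a monomial: the value of `transfer` on its multiplicities, and zero when the
vertices do not form a chain. It vanishes unless the monomial has degree `d + 1`. -/
noncomputable def monDeg (m : Cube (Fin d) →₀ ℕ) : ℤ :=
  if IsChainMon m then transfer d (mults m) 0 0 0 else 0

theorem mults_add_single (m : Cube (Fin d) →₀ ℕ) (v : Cube (Fin d)) :
    mults (m + Finsupp.single v 1) = bump (mults m) (wt (Fin d) v) := by
  funext p
  simp only [mults, bump, Finsupp.add_apply]
  have : ∀ x : Cube (Fin d), (if wt (Fin d) x = p then m x + (Finsupp.single v 1) x else 0) =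
      (if wt (Fin d) x = p then m x else 0) +
        if x = v then (if p = wt (Fin d) v then 1 else 0) else 0 := by
    intro x
    by_cases hx : x = v
    · subst hx
      by_cases hp : wt (Fin d) x = p
      · simp [hp]
      · simp [hp, Ne.symm hp]
    · simp [hx]
  rw [Finset.sum_congr rfl fun x _ => this x, Finset.sum_add_distrib]
  simp

theorem mults_eq_zero {m : Cube (Fin d) →₀ ℕ} {p : ℕ}
    (h : ∀ v, m v ≠ 0 → wt (Fin d) v ≠ p) : mults m p = 0 := by
  refine Finset.sum_eq_zero fun v _ => ?_
  split_ifs with hv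
  · by_contra hm
    exact h v hm hv
  · rfl

theorem mults_ne_zero {m : Cube (Fin d) →₀ ℕ} {v : Cube (Fin d)} (h : m v ≠ 0) :
    mults m (wt (Fin d) v) ≠ 0 := by
  intro h0
  have := Finset.sum_eq_zero_iff.1 h0 v (Finset.mem_univ v)
  simp only [if_true] at this
  exact h this

theorem isChainMon_add {m : Cube (Fin d) →₀ ℕ} {v : Cube (Fin d)} :
    IsChainMon (m + Finsupp.single v 1) ↔ IsChainMon m ∧ Compat m v := by
  constructor
  · intro h
    refine ⟨fun x y hx hy => h x y ?_ ?_, fun x hx => h x v ?_ ?_⟩ <;>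
      simp only [Finsupp.add_apply, Finsupp.single_eq_same] <;> omega
  · rintro ⟨h1, h2⟩ x y hx hy
    have aux : ∀ z : Cube (Fin d), (m + Finsupp.single v 1 : Cube (Fin d) →₀ ℕ) z ≠ 0 →
        m z ≠ 0 ∨ z = v := by
      intro z hz
      by_contra hc
      push Not at hc
      simp [hc.1, Ne.symm hc.2] at hz
    rcases aux x hx with hx' | rfl <;> rcases aux y hy with hy' | rfl
    · exact h1 x y hx' hy'
    · exact h2 x hx'
    · exact (h2 y hy').symm
    · exact Or.inl le_rfl

open Classical in
/-- The vertices compatible with the chain are split at a vertex `u'` of the chain. -/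
theorem split_sum {m : Cube (Fin d) →₀ ℕ} (hm : IsChainMon m) {u' : Cube (Fin d)}
    (hu' : m u' ≠ 0) (P : Cube (Fin d) → Prop) [DecidablePred P] (hP : P u')
    (hPu : ∀ v, u' < v → P v) (f : Cube (Fin d) → ℤ) :
    ∑ v ∈ Finset.univ.filter (fun v => P v ∧ Compat m v), f v =
      ∑ v ∈ Finset.univ.filter (fun v => (P v ∧ Compat m v) ∧ v < u'), f v + f u' +
      ∑ v ∈ Finset.univ.filter (fun v => u' < v ∧ Compat m v), f v := by
  have h1 : Finset.univ.filter (fun v => P v ∧ Compat m v) =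
      insert u' (Finset.univ.filter (fun v => (P v ∧ Compat m v) ∧ v < u')) ∪
        Finset.univ.filter (fun v => u' < v ∧ Compat m v) := by
    ext v
    simp only [Finset.mem_filter, Finset.mem_univ, true_and, Finset.mem_union, Finset.mem_insert]
    constructor
    · rintro ⟨h1, h2⟩
      by_cases hv : v = u'
      · exact Or.inl (Or.inl hv)
      · rcases h2 u' hu' with h | h
        · exact Or.inr ⟨lt_of_le_of_ne h (Ne.symm hv), h2⟩
        · exact Or.inl (Or.inr ⟨⟨h1, h2⟩, lt_of_le_of_ne h hv⟩)
    · rintro ((rfl | h) | h)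
      · exact ⟨hP, fun x hx => hm x v hx hu'⟩
      · exact h.1
      · exact ⟨hPu v h.1, h.2⟩
  rw [h1, Finset.sum_union, Finset.sum_insert (by simp), add_comm (f u')]
  rw [Finset.disjoint_left]
  intro v
  simp only [Finset.mem_filter, Finset.mem_univ, true_and, Finset.mem_insert]
  rintro (rfl | h) h'
  · exact lt_irrefl _ h'.1
  · exact lt_asymm h.2 h'.1

theorem mults_gap {m : Cube (Fin d) →₀ ℕ} {u u' : Cube (Fin d)}
    (hgap : ∀ x, m x ≠ 0 → x ≤ u ∨ u' ≤ x) (t : ℕ) (h1 : wt (Fin d) u + 1 ≤ t)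
    (h2 : t < wt (Fin d) u') : mults m t = 0 := by
  refine mults_eq_zero fun v hv hw => ?_
  rcases hgap v hv with h | h
  · have := wt_le h; omega
  · have := wt_le h; omega

theorem compat_of_gap {m : Cube (Fin d) →₀ ℕ} {u u' v : Cube (Fin d)}
    (hgap : ∀ x, m x ≠ 0 → x ≤ u ∨ u' ≤ x) (h1 : u ≤ v) (h2 : v ≤ u') : Compat m v := by
  intro x hx
  rcases hgap x hx with h | h
  · exact Or.inl (h.trans h1)
  · exact Or.inr (h2.trans h)

open Classical in
/-- Multiplying by all vertices above a vertex `u` of the chain releases one more surplus factor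
into the gap above `u`. -/
theorem sum_above {m : Cube (Fin d) →₀ ℕ} (hm : IsChainMon m) (n : ℕ) :
    ∀ u, m u ≠ 0 → d - wt (Fin d) u = n → ∀ R,
    ∑ v ∈ Finset.univ.filter (fun v => u < v ∧ Compat m v),
      transfer d (bump (mults m) (wt (Fin d) v)) (wt (Fin d) u + 1) 0 R =
    transfer d (mults m) (wt (Fin d) u + 1) 0 (R + 1) := by
  induction n using Nat.strong_induction_on with
  | _ n ih =>
    intro u hu hn R
    have hud := wt_le_dim u
    by_cases hex : ∃ y, m y ≠ 0 ∧ u < y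
    · obtain ⟨y₀, hy₀⟩ := hex
      obtain ⟨u', hmin⟩ := (Finset.univ.filter fun y => m y ≠ 0 ∧ u < y).exists_minimal
        ⟨y₀, by simpa using hy₀⟩
      obtain ⟨hu', huu'⟩ : m u' ≠ 0 ∧ u < u' := by simpa using hmin.1
      have hgap : ∀ x, m x ≠ 0 → x ≤ u ∨ u' ≤ x := by
        intro x hx
        rcases hm x u hx hu with h | h
        · exact Or.inl h
        · by_cases hxu : x = u
          · exact Or.inl hxu.le
          · rcases hm x u' hx hu' with h' | h'
            · exact Or.inr (hmin.2 (by simpa using ⟨hx, lt_of_le_of_ne h (Ne.symm hxu)⟩) h')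
            · exact Or.inr h'
      have hlt := wt_lt huu'
      have hud' := wt_le_dim u'
      obtain ⟨k, hk⟩ : ∃ k, mults m (wt (Fin d) u') = k + 1 :=
        ⟨_, (Nat.succ_pred (mults_ne_zero hu')).symm⟩
      rw [split_sum hm hu' (fun v => u < v) huu' (fun v h => huu'.trans h)]
      rw [gap_sum (wt (Fin d)) _ _ (N := (wt (Fin d) u' - wt (Fin d) u).choose (R + 1))
        (by omega) hud' (mults_gap hgap) hk]
      · rw [transfer_run (by omega : wt (Fin d) u + 1 ≤ wt (Fin d) u') (by omega)
          (mults_gap hgap), zero_add, transfer_vertex hud' hk]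
        split_ifs with h
        · rw [show wt (Fin d) u' - wt (Fin d) u = wt (Fin d) u' - (wt (Fin d) u + 1) + 1 by omega,
            Nat.choose_succ_succ, Nat.sub_sub _ R 1]
          push_cast
          ring
        · rw [Nat.choose_eq_zero_of_lt (by omega)]
          simp
      · intro v hv
        simp only [Finset.mem_filter, Finset.mem_univ, true_and] at hv
        have := wt_lt hv.1.1
        have := wt_lt hv.2
        omega
      · intro hR
        rw [← card_interval huu'.le]
        congr 1
        ext v
        simp only [Finset.mem_filter, Finset.mem_univ, true_and]
        constructor
        · rintro ⟨⟨⟨h1, -⟩, h2⟩, h3⟩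
          exact ⟨⟨h1.le, h2.le⟩, by omega⟩
        · rintro ⟨⟨h1, h2⟩, h3⟩
          refine ⟨⟨⟨lt_of_le_of_ne h1 ?_, compat_of_gap hgap h1 h2⟩, lt_of_le_of_ne h2 ?_⟩,
            by omega⟩
          · rintro rfl; omega
          · rintro rfl; omega
      · intro v hv
        simp only [Finset.mem_filter, Finset.mem_univ, true_and] at hv
        exact wt_lt hv.1
      · exact ih (d - wt (Fin d) u') (by omega) u' hu' rfl
    · -- `u` is the top of the chain, and only the new vertex `1` has a nonzero contribution
      push Not at hex
      have hle : ∀ x, m x ≠ 0 → x ≤ u := by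
        intro x hx
        rcases hm x u hx hu with h | h
        · exact h
        · by_contra hc
          exact hex x hx (lt_of_le_not_ge h hc)
      have hz : ∀ t, wt (Fin d) u + 1 ≤ t → mults m t = 0 := fun t ht =>
        mults_eq_zero fun v hv hw => by have := wt_le (hle v hv); omega
      have hterm : ∀ v ∈ Finset.univ.filter (fun v => u < v ∧ Compat m v),
          transfer d (bump (mults m) (wt (Fin d) v)) (wt (Fin d) u + 1) 0 R =
          if v = 1 then (if d = wt (Fin d) u + 1 + R then 1 else 0) else 0 := by
        intro v hv
        simp only [Finset.mem_filter, Finset.mem_univ, true_and] at hv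
        have h1 := wt_lt hv.1
        have h2 := wt_le_dim v
        rw [transfer_run (q := wt (Fin d) v) (by omega) (by omega) (fun t h3 h4 => by
          rw [bump_of_ne (by omega), hz t h3]), zero_add,
          transfer_vertex (k := 0) h2 (by rw [bump_self, hz _ (by omega)]),
          transfer_run (q := d + 1) (by omega) le_rfl (fun t h3 h4 => by
          rw [bump_of_ne (by omega), hz t (by omega)]), transfer_end (by omega)]
        by_cases hv1 : v = 1
        · subst hv1
          rw [wt_one]
          rcases lt_trichotomy (d - (wt (Fin d) u + 1)) R with h | h | h
          · rw [Nat.choose_eq_zero_of_lt h, if_neg (by omega : ¬ d = _)]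
            simp
          · rw [h, if_pos (by omega : d = _)]
            simp
          · rw [Nat.choose_eq_zero_of_lt (by omega : 0 < d - (wt (Fin d) u + 1) - R),
              if_neg (by omega : ¬ d = _)]
            simp
        · have : wt (Fin d) v ≠ d := fun h => hv1 (eq_of_wt_le (le_top v) (by simp [h]))
          rw [if_neg (by omega), if_neg hv1, mul_zero]
      rw [Finset.sum_congr rfl hterm, Finset.sum_ite_eq', transfer_run (q := d + 1) (by omega)
        le_rfl (fun t h3 _ => hz t h3), transfer_end (by omega)]
      by_cases h : d = wt (Fin d) u + 1 + R
      · rw [if_pos, if_pos h, if_pos (by omega)]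
        simp only [Finset.mem_filter, Finset.mem_univ, true_and]
        refine ⟨lt_of_le_of_ne (le_top u) ?_, fun x _ => Or.inl (le_top x)⟩
        rintro rfl
        simp at h
        omega
      · rw [if_neg h, if_neg (by omega : ¬ 0 + _ = _)]
        simp

open Classical in
theorem sum_monDeg {m : Cube (Fin d) →₀ ℕ} (hm : IsChainMon m) (P : Cube (Fin d) → Prop)
    [DecidablePred P] :
    ∑ v ∈ Finset.univ.filter P, monDeg (m + Finsupp.single v 1) =
    ∑ v ∈ Finset.univ.filter (fun v => P v ∧ Compat m v),
      transfer d (bump (mults m) (wt (Fin d) v)) 0 0 0 := by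
  rw [← Finset.filter_filter, Finset.sum_filter (Compat m)]
  refine Finset.sum_congr rfl fun v _ => ?_
  rw [monDeg, isChainMon_add, mults_add_single]
  simp only [hm, true_and]

open Classical in
/-- The degree annihilates (R2). -/
theorem sum_monDeg_univ {m : Cube (Fin d) →₀ ℕ} {u : Cube (Fin d)} (hu : m u ≠ 0) :
    ∑ v, monDeg (m + Finsupp.single v 1) = 0 := by
  by_cases hm : IsChainMon m
  swap
  · exact Finset.sum_eq_zero fun v _ => if_neg fun h => hm (isChainMon_add.1 h).1
  obtain ⟨u', hmin⟩ := (Finset.univ.filter fun y => m y ≠ 0).exists_minimal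
    ⟨u, by simpa using hu⟩
  have hu' : m u' ≠ 0 := by simpa using hmin.1
  have hle : ∀ x, m x ≠ 0 → u' ≤ x := by
    intro x hx
    rcases hm x u' hx hu' with h' | h'
    · exact hmin.2 (by simpa using hx) h'
    · exact h'
  have hud' := wt_le_dim u'
  obtain ⟨k, hk⟩ : ∃ k, mults m (wt (Fin d) u') = k + 1 :=
    ⟨_, (Nat.succ_pred (mults_ne_zero hu')).symm⟩
  have h := sum_monDeg hm (fun _ => True)
  rw [Finset.filter_true] at h
  rw [h, split_sum hm hu' (fun _ => True) trivial (fun _ _ => trivial),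
    gap_sum (wt (Fin d)) _ _ (N := 1) (Nat.zero_le _) hud' ?_ hk ?_ ?_ ?_
      (sum_above hm _ u' hu' rfl)]
  · simp
  · exact fun t _ ht => mults_eq_zero fun v hv hw => by have := wt_le (hle v hv); omega
  · intro v hv
    simp only [Finset.mem_filter, Finset.mem_univ, true_and] at hv
    exact ⟨Nat.zero_le _, wt_lt hv.2⟩
  · -- the only vertex of weight zero is the bottom vertex
    intro hpos
    rw [Finset.card_eq_one]
    refine ⟨0, ?_⟩
    ext v
    simp only [Finset.mem_filter, Finset.mem_univ, true_and, Finset.mem_singleton]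
    constructor
    · rintro ⟨-, hv⟩
      exact (eq_of_wt_le (bot_le v) (by simp [hv])).symm
    · rintro rfl
      refine ⟨⟨fun x _ => Or.inr (bot_le x), lt_of_le_of_ne (bot_le u') ?_⟩, by simp⟩
      rintro rfl
      simp at hpos
  · intro v hv
    simp only [Finset.mem_filter, Finset.mem_univ, true_and] at hv
    exact wt_lt hv.1

open Classical in
/-- The degree annihilates (R3) for the facet `v_i = 1`: the critical vertices of the gap in which
the `i`-th coordinate switches are counted in an interval of dimension one less, so that there is
no excess. -/
theorem sum_monDeg_one {m : Cube (Fin d) →₀ ℕ} {x y : Cube (Fin d)} {i : Fin d} (hx : m x ≠ 0)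
    (hy : m y ≠ 0) (hxi : x i = 0) (hyi : y i = 1) :
    ∑ v ∈ Finset.univ.filter (fun v : Cube (Fin d) => v i = 1),
      monDeg (m + Finsupp.single v 1) = 0 := by
  by_cases hm : IsChainMon m
  swap
  · exact Finset.sum_eq_zero fun v _ => if_neg fun h => hm (isChainMon_add.1 h).1
  obtain ⟨u', hmin⟩ := (Finset.univ.filter fun z => m z ≠ 0 ∧ z i = 1).exists_minimal
    ⟨y, by simpa using ⟨hy, hyi⟩⟩
  obtain ⟨hu', hui'⟩ : m u' ≠ 0 ∧ u' i = 1 := by simpa using hmin.1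
  obtain ⟨u, hmax⟩ := (Finset.univ.filter fun z => m z ≠ 0 ∧ z i = 0).exists_maximal
    ⟨x, by simpa using ⟨hx, hxi⟩⟩
  obtain ⟨hu, hui⟩ : m u ≠ 0 ∧ u i = 0 := by simpa using hmax.1
  have hgap : ∀ z, m z ≠ 0 → z ≤ u ∨ u' ≤ z := by
    intro z hz
    rcases fin2_cases (z i) with hzi | hzi
    · left
      rcases hm z u hz hu with h | h
      · exact h
      · exact hmax.2 (by simpa using ⟨hz, hzi⟩) h
    · right
      rcases hm z u' hz hu' with h | h
      · exact hmin.2 (by simpa using ⟨hz, hzi⟩) h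
      · exact h
  have hlt_of : ∀ v, v i = 1 → (u ≤ v ∨ v ≤ u) → u < v := by
    intro v hvi hc
    have hne : u ≠ v := by
      rintro rfl
      simp [hui] at hvi
    rcases hc with h | h
    · exact lt_of_le_of_ne h hne
    · have := coord_of_le h i
      simp [hui, hvi] at this
  have huu' : u < u' := hlt_of u' hui' (hm u u' hu hu')
  have hlt := wt_lt huu'
  have hud' := wt_le_dim u'
  obtain ⟨k, hk⟩ : ∃ k, mults m (wt (Fin d) u') = k + 1 :=
    ⟨_, (Nat.succ_pred (mults_ne_zero hu')).symm⟩
  obtain ⟨c, R, hc⟩ := transfer_prefix (wt_le_dim u) (mults_ne_zero hu) _ rfl (Nat.zero_le _) 0 0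
  rw [sum_monDeg hm (fun v => v i = 1)]
  have hred : ∀ v ∈ Finset.univ.filter (fun v : Cube (Fin d) => v i = 1 ∧ Compat m v),
      transfer d (bump (mults m) (wt (Fin d) v)) 0 0 0 =
        c * transfer d (bump (mults m) (wt (Fin d) v)) (wt (Fin d) u + 1) 0 R := by
    intro v hv
    simp only [Finset.mem_filter, Finset.mem_univ, true_and] at hv
    have := wt_lt (hlt_of v hv.1 (hv.2 u hu))
    exact hc _ fun t _ ht => bump_of_ne (by omega)
  have hup : ∀ v, u' < v → v i = 1 := by
    intro v hv
    have := coord_of_le hv.le i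
    simpa [hui'] using this
  -- the vertex `u` with its `i`-th coordinate switched on
  have hle₁ : Function.update u i 1 ≤ u' := by
    refine le_of_coord fun j => ?_
    by_cases hj : j = i
    · subst hj; exact Or.inr hui'
    · simpa [hj] using coord_of_le huu'.le j
  have hwt₁ : wt (Fin d) (Function.update u i 1) = wt (Fin d) u + 1 := by
    unfold wt
    rw [← Finset.card_insert_of_notMem (a := i) (by simp [hui])]
    congr 1
    ext j
    by_cases hj : j = i
    · subst hj; simp
    · simp [hj]
  rw [Finset.sum_congr rfl hred, ← Finset.mul_sum,
    split_sum hm hu' (fun v => v i = 1) hui' hup,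
    gap_sum (wt (Fin d)) _ _ (N := (wt (Fin d) u' - (wt (Fin d) u + 1)).choose R)
      (by omega) hud' (mults_gap hgap) hk ?_ ?_ ?_ (sum_above hm _ u' hu' rfl)]
  · simp
  · intro v hv
    simp only [Finset.mem_filter, Finset.mem_univ, true_and] at hv
    exact ⟨wt_lt (hlt_of v hv.1.1 (hv.1.2 u hu)), wt_lt hv.2⟩
  · intro hR
    rw [← hwt₁, ← card_interval hle₁]
    congr 1
    ext v
    simp only [Finset.mem_filter, Finset.mem_univ, true_and]
    constructor
    · rintro ⟨⟨⟨h1, h2⟩, h3⟩, h4⟩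
      refine ⟨⟨le_of_coord fun j => ?_, h3.le⟩, h4⟩
      by_cases hj : j = i
      · subst hj; exact Or.inr h1
      · simpa [hj] using coord_of_le (hlt_of v h1 (h2 u hu)).le j
    · rintro ⟨⟨h1, h2⟩, h3⟩
      have hle : u ≤ v := by
        refine le_of_coord fun j => ?_
        by_cases hj : j = i
        · subst hj; exact Or.inl hui
        · simpa [hj] using coord_of_le h1 j
      refine ⟨⟨⟨by simpa using coord_of_le h1 i, compat_of_gap hgap hle h2⟩,
        lt_of_le_of_ne h2 ?_⟩, h3⟩
      rintro rfl
      omega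
  · intro v hv
    simp only [Finset.mem_filter, Finset.mem_univ, true_and] at hv
    exact wt_lt hv.1

/-- The degree annihilates (R3): the facet `v_i = 0` is the complement of the facet `v_i = 1`. -/
theorem sum_monDeg_coord {m : Cube (Fin d) →₀ ℕ} {x y : Cube (Fin d)} {i : Fin d} (hx : m x ≠ 0)
    (hy : m y ≠ 0) (hxy : x i ≠ y i) :
    ∑ v ∈ Finset.univ.filter (fun v : Cube (Fin d) => v i = x i),
      monDeg (m + Finsupp.single v 1) = 0 := by
  rcases fin2_cases (x i) with h0 | h1
  · have hy1 : y i = 1 := (fin2_cases (y i)).resolve_left fun h => hxy (h0.trans h.symm)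
    have h2 := Finset.sum_filter_add_sum_filter_not Finset.univ
      (fun v : Cube (Fin d) => v i = 1) fun v => monDeg (m + Finsupp.single v 1)
    rw [sum_monDeg_one hx hy h0 hy1, sum_monDeg_univ hx, zero_add] at h2
    rw [← h2]
    refine Finset.sum_congr (Finset.filter_congr fun v _ => ?_) fun _ _ => rfl
    rw [h0]
    have := fin2_cases (v i)
    grind
  · have hy0 : y i = 0 := (fin2_cases (y i)).resolve_right fun h => hxy (h1.trans h.symm)
    rw [h1]
    exact sum_monDeg_one hy hx hy0 h1

/-- The linear functional on polynomials with value `monDeg m` on the monomial with exponents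
`m`. -/
noncomputable def degMap (d : ℕ) : MvPolynomial (Cube (Fin d)) ℤ →ₗ[ℤ] ℤ :=
  (basisMonomials (Cube (Fin d)) ℤ).constr ℤ monDeg

theorem degMap_monomial (m : Cube (Fin d) →₀ ℕ) (c : ℤ) :
    degMap d (monomial m c) = c * monDeg m := by
  have h : degMap d (monomial m 1) = monDeg m := by
    have := (basisMonomials (Cube (Fin d)) ℤ).constr_basis ℤ monDeg m
    rwa [coe_basisMonomials] at this
  rw [← h, ← smul_eq_mul, ← map_smul, smul_monomial, smul_eq_mul, mul_one]

theorem monomial_mul_list (m : Cube (Fin d) →₀ ℕ) (l : List (Cube (Fin d))) :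
    ∃ m', monomial m (1 : ℤ) * (l.map X).prod = monomial m' 1 ∧ ∀ v ∈ l, m' v ≠ 0 := by
  induction l with
  | nil => exact ⟨m, by simp, by simp⟩
  | cons u l ih =>
    obtain ⟨m', h1, h2⟩ := ih
    refine ⟨m' + Finsupp.single u 1, ?_, ?_⟩
    · rw [List.map_cons, List.prod_cons, mul_left_comm, h1, mul_comm, X, monomial_mul, one_mul]
    · intro v hv
      rcases List.mem_cons.1 hv with rfl | hv
      · simp
      · have := h2 v hv
        simp only [Finsupp.add_apply]
        omega

theorem degMap_monomial_mul_gen (m : Cube (Fin d) →₀ ℕ) {p : MvPolynomial (Cube (Fin d)) ℤ}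
    (hp : p ∈ ({ p | ∃ l : List (Cube (Fin d)),
        ¬ (l.Pairwise fun u v => u ≤ v ∨ v ≤ u) ∧ p = (l.map X).prod } ∪
     { p | ∃ u : Cube (Fin d), p = X u * ∑ v : Cube (Fin d), X v } ∪
     { p | ∃ u w : Cube (Fin d), ∃ i : Fin d, u i ≠ w i ∧
         p = X u * X w * ∑ v ∈ Finset.univ.filter (fun v : Cube (Fin d) => v i = u i), X v } :
      Set (MvPolynomial (Cube (Fin d)) ℤ))) :
    degMap d (monomial m 1 * p) = 0 := by
  rcases hp with (⟨l, hl, rfl⟩ | ⟨u, rfl⟩) | ⟨u, w, i, hi, rfl⟩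
  · obtain ⟨m', h1, h2⟩ := monomial_mul_list m l
    rw [h1, degMap_monomial, one_mul, monDeg, if_neg]
    intro hc
    exact hl (List.pairwise_iff_forall_sublist.2 fun {a b} hab =>
      hc a b (h2 a (hab.subset (by simp))) (h2 b (hab.subset (by simp))))
  · have : monomial m (1 : ℤ) * (X u * ∑ v : Cube (Fin d), X v) =
        ∑ v : Cube (Fin d), monomial (m + Finsupp.single u 1 + Finsupp.single v 1) 1 := by
      rw [← mul_assoc, Finset.mul_sum]
      simp only [X, monomial_mul, one_mul]
    rw [this, map_sum]
    simp only [degMap_monomial, one_mul]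
    exact sum_monDeg_univ (u := u) (by simp)
  · have : monomial m (1 : ℤ) * (X u * X w *
        ∑ v ∈ Finset.univ.filter (fun v : Cube (Fin d) => v i = u i), X v) =
        ∑ v ∈ Finset.univ.filter (fun v : Cube (Fin d) => v i = u i),
          monomial (m + Finsupp.single u 1 + Finsupp.single w 1 + Finsupp.single v 1) 1 := by
      rw [← mul_assoc, ← mul_assoc, Finset.mul_sum]
      simp only [X, monomial_mul, one_mul]
    rw [this, map_sum]
    simp only [degMap_monomial, one_mul]
    exact sum_monDeg_coord (x := u) (y := w) (by simp) (by simp) hi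

theorem degMap_irat {p : MvPolynomial (Cube (Fin d)) ℤ} (hp : p ∈ Irat (Fin d)) :
    degMap d p = 0 := by
  suffices h : ∀ q, degMap d (q * p) = 0 by simpa using h 1
  induction hp using Submodule.span_induction with
  | zero => simp
  | add x y _ _ hx hy => intro q; rw [mul_add, map_add, hx, hy, add_zero]
  | smul r x _ hx => intro q; rw [smul_eq_mul, ← mul_assoc]; exact hx _
  | mem x hx =>
    intro q
    rw [q.as_sum, Finset.sum_mul, map_sum]
    refine Finset.sum_eq_zero fun m _ => ?_
    have : monomial m (coeff m q) = coeff m q • monomial m (1 : ℤ) := by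
      rw [smul_monomial, smul_eq_mul, mul_one]
    rw [this, smul_mul_assoc, map_smul, degMap_monomial_mul_gen m hx, smul_zero]

theorem transfer_ones {a : ℕ → ℕ} (ha : ∀ t, t ≤ d → a t = 1) (n : ℕ) : ∀ {p : ℕ},
    d + 1 - p = n → transfer d a p 0 0 = 1 := by
  induction n with
  | zero => intro p hp; rw [transfer_end (by omega), if_pos rfl]
  | succ n ih =>
    intro p hp
    rw [transfer_vertex (k := 0) (by omega) (ha p (by omega)), ih (by omega)]
    simp

theorem degMap_chain {u : Fin (d + 1) → Cube (Fin d)} (hu : StrictMono u) :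
    degMap d (∏ j, X (u j)) = 1 := by
  have hmon : (∏ j, X (u j) : MvPolynomial (Cube (Fin d)) ℤ) =
      monomial (∑ j, Finsupp.single (u j) 1) 1 := by
    rw [monomial_sum_one]
    rfl
  have hval : ∀ v, (∑ j, Finsupp.single (u j) 1 : Cube (Fin d) →₀ ℕ) v =
      ∑ j, if u j = v then 1 else 0 := by
    intro v
    rw [Finsupp.finsetSum_apply]
    simp only [Finsupp.single_apply]
  have hex : ∀ v, (∑ j, Finsupp.single (u j) 1 : Cube (Fin d) →₀ ℕ) v ≠ 0 → ∃ j, u j = v := by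
    intro v hv
    rw [hval] at hv
    obtain ⟨j, -, hj⟩ := Finset.exists_ne_zero_of_sum_ne_zero hv
    exact ⟨j, by by_contra h; simp [h] at hj⟩
  rw [hmon, degMap_monomial, one_mul, monDeg, if_pos]
  · refine transfer_ones (fun t ht => ?_) _ rfl
    have : ∀ v : Cube (Fin d), (if wt (Fin d) v = t then
        (∑ j, Finsupp.single (u j) 1 : Cube (Fin d) →₀ ℕ) v else 0) =
        ∑ j, if u j = v then (if wt (Fin d) (u j) = t then 1 else 0) else 0 := by
      intro v
      rw [hval]
      split_ifs with h
      · exact Finset.sum_congr rfl fun j _ => by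
          by_cases hj : u j = v
          · simp [hj, h]
          · simp [hj]
      · exact (Finset.sum_eq_zero fun j _ => by
          by_cases hj : u j = v
          · simp [hj, h]
          · simp [hj]).symm
    rw [mults, Finset.sum_congr rfl fun v _ => this v, Finset.sum_comm]
    simp only [Finset.sum_ite_eq, Finset.mem_univ, if_true, wt_strictMono hu]
    rw [Finset.sum_eq_single (⟨t, by omega⟩ : Fin (d + 1))]
    · simp
    · intro j _ hj
      rw [if_neg]
      rintro rfl
      exact hj rfl
    · simp
  · intro x y hx hy
    obtain ⟨j, rfl⟩ := hex x hx
    obtain ⟨k, rfl⟩ := hex y hy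
    rcases le_total j k with h | h
    · exact Or.inl (hu.monotone h)
    · exact Or.inr (hu.monotone h)

end Degree

end ChowCube
/-- **Top graded piece of the hypercube** (Section 4): all maximal chains
`0 = u_0 < u_1 < … < u_d = 1` of `{0,1}^d` give the same class
`C_{u_0}⋯C_{u_d}` in `Chow(□^d)`, and `Chow^{d+1}(□^d)` is a free `ℤ`-module of rank one
generated by this common class. -/
theorem ChowCube.top_piece_rank_one
    (d : ℕ) (hd : 1 ≤ d) :
    (∀ u w : Fin (d + 1) → ChowCube.Cube (Fin d),
      StrictMono u → u 0 = (fun _ => 0) → u (Fin.last d) = (fun _ => 1) →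
      StrictMono w → w 0 = (fun _ => 0) → w (Fin.last d) = (fun _ => 1) →
      ChowCube.mk (Fin d) (∏ j, MvPolynomial.X (u j)) =
        ChowCube.mk (Fin d) (∏ j, MvPolynomial.X (w j))) ∧
    (∀ u : Fin (d + 1) → ChowCube.Cube (Fin d),
      StrictMono u → u 0 = (fun _ => 0) → u (Fin.last d) = (fun _ => 1) →
      ChowCube.piece (Fin d) (d + 1) =
          Submodule.span ℤ {ChowCube.mk (Fin d) (∏ j, MvPolynomial.X (u j))} ∧
        ∀ n : ℤ, n • ChowCube.mk (Fin d) (∏ j, MvPolynomial.X (u j)) = 0 → n = 0) := by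
  have hcls : ∀ u : Fin (d + 1) → ChowCube.Cube (Fin d),
      ChowCube.mk (Fin d) (∏ j, MvPolynomial.X (u j)) = ∏ j, ChowCube.cls (u j) :=
    fun u => map_prod _ _ _
  refine ⟨fun u w hu _ _ hw _ _ => ?_, fun u hu _ _ => ⟨le_antisymm ?_ ?_, fun n hn => ?_⟩⟩
  · rw [hcls, hcls, ChowCube.chain_class hd hu, ChowCube.chain_class hd hw]
  · rw [hcls, ChowCube.chain_class hd hu]
    exact ChowCube.piece_le hd
  · rw [Submodule.span_singleton_le_iff_mem]
    refine ⟨_, ?_, rfl⟩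
    have h := MvPolynomial.IsHomogeneous.prod Finset.univ
      (fun j => (MvPolynomial.X (u j) : MvPolynomial (ChowCube.Cube (Fin d)) ℤ)) (fun _ => 1)
      (fun j _ => MvPolynomial.isHomogeneous_X _ _)
    simpa using h
  · rw [← map_smul] at hn
    have h := ChowCube.degMap_irat (Ideal.Quotient.eq_zero_iff_mem.1 hn)
    rw [map_smul, ChowCube.degMap_chain hu] at h
    simpa using h
end
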